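/- arXiv:1907.12134 — 7 statements merged into one kernel-verified Lean document; each statement's English description precedes it below -/
import Mathlib

section
/- Let K ⊆ K' be an extension of fields and I ≤ K[x₁,…,xₙ] a proper ideal. Then the height of I·K'[x₁,…,xₙ] equals the height of I, and the Krull dimension of K'[x₁,…,xₙ]/(I·K'[x₁,…,xₙ]) equals the Krull dimension of K[x₁,…,xₙ]/I. -/
/-!
Write `R = K[x₁,…,xₙ]` and `S = K'[x₁,…,xₙ]`.

Heights: `S` is free, hence faithfully flat, over `R`. By going down, a prime `P` of `S` lying over
`p` satisfies `ht P = ht p + ht (P / pS)`, and every prime of `R` has a prime of `S` above it, so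
extending an ideal along `R → S` preserves its height (`height_map_of_faithfullyFlat`).

Dimensions: `S ⧸ I S` is `K' ⊗[K] (R ⧸ I)`. A Noether normalization `K[y₁,…,yₛ] → R ⧸ I` becomes
a Noether normalization `K'[y₁,…,yₛ] → S ⧸ I S` after base change, and an injective integral
extension preserves Krull dimension (`ringKrullDim_eq_of_isIntegral`), so both dimensions are `s`.
-/

/-- The height of an ideal `I`: the infimum of the heights of the prime ideals
containing `I` (the height of a prime being its height in the poset of primes). -/
noncomputable def idealHeight {R : Type*} [CommRing R] (I : Ideal R) : ℕ∞ :=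
  ⨅ (p : PrimeSpectrum R) (_ : I ≤ p.asIdeal), Order.height p

open TensorProduct

theorem idealHeight_eq {R : Type*} [CommRing R] (I : Ideal R) : idealHeight I = I.height := by
  rw [idealHeight, Ideal.height_eq_inf_minimalPrimes]
  apply le_antisymm
  · refine le_iInf₂ fun J hJ => ?_
    have := hJ.1.1
    rw [PrimeSpectrum.height_eq_orderHeight ⟨J, this⟩]
    exact iInf₂_le (⟨J, this⟩ : PrimeSpectrum R) hJ.1.2
  · refine le_iInf₂ fun p hp => ?_
    obtain ⟨J, hJ, hJp⟩ := Ideal.exists_minimalPrimes_le hp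
    refine (iInf₂_le J hJ).trans ?_
    rw [← PrimeSpectrum.height_eq_orderHeight]
    exact Ideal.height_mono hJp

/-- Incomparability makes contraction of primes strictly monotone, and lying over together with
going up lifts chains of primes. -/
theorem ringKrullDim_eq_of_isIntegral {A B : Type*} [CommRing A] [CommRing B] (f : A →+* B)
    (hinj : Function.Injective f) (hint : f.IsIntegral) : ringKrullDim B = ringKrullDim A := by
  algebraize [f]
  have : FaithfulSMul A B := (faithfulSMul_iff_algebraMap_injective A B).mpr hinj
  apply le_antisymm
  · refine Order.krullDim_le_of_strictMono (PrimeSpectrum.comap (algebraMap A B)) fun P Q h => ?_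
    exact Ideal.IsIntegral.comap_lt_comap h
  · refine iSup_le fun l => ?_
    obtain ⟨P, hP, hover⟩ := (Ideal.nonempty_primesOver (S := B) (RelSeries.head l).asIdeal).some
    obtain ⟨L, hL, -⟩ := Ideal.exists_ltSeries_of_hasGoingUp l P
    rw [← hL]
    exact le_iSup (fun L : LTSeries (PrimeSpectrum B) => (L.length : WithBot ℕ∞)) L

/-- Base change of a Noether normalization `K[y₁,…,yₛ] → A` along `K → K'` is again finite, and
injective by flatness of `K'`, so both rings have dimension `s`. -/
theorem ringKrullDim_tensorProduct_eq (K K' A : Type*) [Field K] [Field K'] [Algebra K K']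
    [CommRing A] [Nontrivial A] [Algebra K A] [Algebra.FiniteType K A] :
    ringKrullDim (K' ⊗[K] A) = ringKrullDim A := by
  obtain ⟨s, g, hinj, hfin⟩ := exists_finite_inj_algHom_of_fg K A
  rw [ringKrullDim_eq_of_isIntegral g.toRingHom hinj hfin.to_isIntegral,
    ringKrullDim_eq_of_isIntegral (Algebra.TensorProduct.map (AlgHom.id K K') g).toRingHom
     ?_ ?_, ringKrullDim_eq_of_ringEquiv (MvPolynomial.algebraTensorAlgEquiv K K').toRingEquiv]
  · simp [MvPolynomial.ringKrullDim_of_isNoetherianRing]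
  · exact Module.Flat.lTensor_preserves_injective_linearMap (M := K') g.toLinearMap hinj
  · exact (RingHom.Finite.tensorProductMap (.id K K') hfin).to_isIntegral

attribute [local instance] MvPolynomial.algebraMvPolynomial in
theorem faithfullyFlat_mvPolynomial (K K' : Type*) [Field K] [Field K'] [Algebra K K'] (n : ℕ) :
    Module.FaithfullyFlat (MvPolynomial (Fin n) K) (MvPolynomial (Fin n) K') := by
  have : Algebra.IsPushout K (MvPolynomial (Fin n) K) K' (MvPolynomial (Fin n) K') := inferInstance
  -- A `K`-basis of `K'` is also a `K[x₁,…,xₙ]`-basis of `K'[x₁,…,xₙ]`.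
  have := Module.Free.of_basis (this.1.basis (Module.Free.chooseBasis K K'))
  infer_instance

/-- A prime `P` over `I S` has height at least that of its contraction, by going
down. Conversely, a minimal prime `P` of `p S` inside a prime over `p` lies over `p`, and its image
in `S ⧸ p S` has height zero, so it has the height of `p`. -/
theorem height_map_of_faithfullyFlat {R S : Type*} [CommRing R] [CommRing S] [Algebra R S]
    [IsNoetherianRing R] [IsNoetherianRing S] [Module.FaithfullyFlat R S] (I : Ideal R) :
    (I.map (algebraMap R S)).height = I.height := by
  apply le_antisymm
  · rw [Ideal.height_eq_inf_minimalPrimes (I := I)]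
    refine le_iInf₂ fun p hp => ?_
    have := hp.1.1
    obtain ⟨Q, hQ, hQp⟩ := Ideal.exists_isPrime_liesOver_of_faithfullyFlat (B := S) p
    obtain ⟨P, hP, hPQ⟩ := Ideal.exists_minimalPrimes_le
      (Ideal.map_le_iff_le_comap.mpr (hQp.over.le : p ≤ Q.comap (algebraMap R S)))
    have := hP.1.1
    have : P.LiesOver p := ⟨le_antisymm (Ideal.map_le_iff_le_comap.mp hP.1.2)
      ((Ideal.comap_mono hPQ).trans hQp.over.ge)⟩
    refine (Ideal.height_mono ((Ideal.map_mono hp.1.2).trans hP.1.2)).trans ?_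
    rw [Ideal.height_eq_height_add_of_liesOver_of_hasGoingDown p P]
    rw [Ideal.minimalPrimes_eq_comap] at hP
    obtain ⟨q, hq, hqP⟩ := hP
    have := hq.1.1
    rw [← hqP, Ideal.map_comap_of_surjective _ Ideal.Quotient.mk_surjective,
      Ideal.height_eq_zero_iff.mpr hq, add_zero]
  · rw [Ideal.height_eq_inf_minimalPrimes (I := I.map _)]
    refine le_iInf₂ fun P hP => ?_
    have := hP.1.1
    rw [Ideal.height_eq_height_add_of_liesOver_of_hasGoingDown (P.under R) P]
    exact (Ideal.height_mono (Ideal.map_le_iff_le_comap.mp hP.1.2)).trans le_self_add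

/-- **Base change, height and dimension.**
Let `K ⊆ K'` be an extension of fields and `I` a proper ideal of `K[x₁,…,xₙ]`.
Then the height of the extended ideal `I·K'[x₁,…,xₙ]` equals the height of `I`,
and the Krull dimension of `K'[x₁,…,xₙ]/(I·K'[x₁,…,xₙ])` equals the Krull
dimension of `K[x₁,…,xₙ]/I`. -/
theorem height_and_dim_base_change
    (K K' : Type*) [Field K] [Field K'] [Algebra K K']
    (n : ℕ) (I : Ideal (MvPolynomial (Fin n) K)) (hI : I ≠ ⊤) :
    idealHeight (Ideal.map (MvPolynomial.map (algebraMap K K')) I) = idealHeight I ∧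
    ringKrullDim (MvPolynomial (Fin n) K' ⧸
        Ideal.map (MvPolynomial.map (algebraMap K K')) I)
      = ringKrullDim (MvPolynomial (Fin n) K ⧸ I) := by
  constructor
  · rw [idealHeight_eq, idealHeight_eq]
    let := MvPolynomial.algebraMvPolynomial (σ := Fin n) (R := K) (S := K')
    have := faithfullyFlat_mvPolynomial K K' n
    exact height_map_of_faithfullyFlat I
  · have := Ideal.Quotient.nontrivial_iff.mpr hI
    refine .trans ?_ (ringKrullDim_tensorProduct_eq K K' (MvPolynomial (Fin n) K ⧸ I))
    refine .symm <| (ringKrullDim_eq_of_ringEquiv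
      (Algebra.TensorProduct.tensorQuotientEquiv (R := K) K' _ K' I).toRingEquiv).trans
      (ringKrullDim_eq_of_ringEquiv (Ideal.quotientEquiv _ _
        (MvPolynomial.algebraTensorAlgEquiv K K').toRingEquiv ?_))
    change _ = (Ideal.map (Algebra.TensorProduct.includeRight (R := K) (A := K')).toRingHom I).map
      (MvPolynomial.algebraTensorAlgEquiv K K').toRingEquiv.toRingHom
    rw [Ideal.map_map]
    congr 1
    ext x <;> simp
end

section
/- Let K ⊆ K' be an extension of fields of characteristic 0 and I ≤ K[x₁,…,xₙ] an ideal. Then the radical commutes with extension: √(I·K'[x₁,…,xₙ]) = (√I)·K'[x₁,…,xₙ]. -/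
/-!
The inclusion `⊇` holds for any ring homomorphism. For `⊆` it suffices that the extension of `√I` to
`K'[x]` is radical, i.e. that the quotient `K' ⊗ (K[x] / √I)` is reduced; this is an instance of the
fact that, over a field `K` of characteristic zero, `L ⊗ A` is reduced for every reduced `K`-algebra
`A` and every field extension `L` (`isReduced_tensor`).

To prove that fact, choose a transcendence basis of `L / K` and let `F` be the subfield it generates.
The ring `F ⊗ A` is a localization of a polynomial ring over `A`, hence reduced. The extension
`L / F` is algebraic and separable, and as a given tensor involves only finitely many elements of
`L` it may be taken to be finite. In that case the trace argument of `isReduced_tensor_finite` applies.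
-/

open TensorProduct

theorem algebraTrace_tmul {F A L : Type*} [Field F] [Field L] [Algebra F L] [FiniteDimensional F L]
    [CommRing A] [Algebra F A] (a : A) (l : L) :
    Algebra.trace A (A ⊗[F] L) (a ⊗ₜ l) = a * algebraMap F A (Algebra.trace F L l) := by
  have h : (Algebra.lmul A (A ⊗[F] L) (a ⊗ₜ l) : A ⊗[F] L →ₗ[A] A ⊗[F] L)
      = a • (Algebra.lmul F L l : L →ₗ[F] L).baseChange A := by
    ext; simp [TensorProduct.smul_tmul']
  rw [Algebra.trace_apply, Algebra.trace_apply]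
  have := congrArg (LinearMap.trace A (A ⊗[F] L)) h
  rw [map_smul, LinearMap.trace_baseChange] at this
  exact this

/-- The trace of a nilpotent element of `A ⊗ L` is a nilpotent element of `A`, hence zero. Applied to
all multiples of a nilpotent `z`, this kills every coordinate of `z`, because the trace form of
`L / F` is nondegenerate. -/
theorem isReduced_tensor_finite {F A L : Type*} [Field F] [Field L] [Algebra F L]
    [FiniteDimensional F L] [Algebra.IsSeparable F L] [CommRing A] [Algebra F A] [IsReduced A] :
    IsReduced (A ⊗[F] L) := by
  refine ⟨fun z hz => ?_⟩
  let b := Module.finBasis F L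
  let b' := (Algebra.traceForm F L).dualBasis (traceForm_nondegenerate F L) b
  let B := b.baseChange A
  rw [← B.sum_repr z]
  refine Finset.sum_eq_zero fun i _ => ?_
  -- Multiplying by the `i`-th dual basis vector and taking the trace extracts the `i`-th coordinate.
  have h0 : Algebra.trace A (A ⊗[F] L) ((1 ⊗ₜ b' i) * z) = 0 :=
    (Algebra.isNilpotent_trace_of_isNilpotent ((Commute.all _ _).isNilpotent_mul_left hz)).eq_zero
  have hb (j) : Algebra.trace F L (b' i * b j) = if j = i then 1 else 0 :=
    LinearMap.BilinForm.apply_dualBasis_left (traceForm_nondegenerate F L) b i j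
  rw [← B.sum_repr z, Finset.mul_sum, map_sum] at h0
  simp only [B, Module.Basis.baseChange_apply, mul_smul_comm, map_smul,
    Algebra.TensorProduct.tmul_mul_tmul, algebraTrace_tmul, hb] at h0
  simp at h0
  simp [B, h0]

theorem isReduced_tensor_separable {F A L : Type*} [Field F] [Field L] [Algebra F L]
    [Algebra.IsSeparable F L] [CommRing A] [Algebra F A] [IsReduced A] :
    IsReduced (A ⊗[F] L) := by
  refine IsReduced.tensorProduct_of_flat_of_forall_fg fun B hB => ?_
  let : Field B := (Subalgebra.isField_of_algebraic B).toField
  have : Algebra.IsSeparable F B := Algebra.IsSeparable.of_algHom F L B.val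
  have : Algebra.FiniteType F B := B.fg_iff_finiteType.1 hB
  have : FiniteDimensional F B := Algebra.IsIntegral.finite
  exact isReduced_tensor_finite

/-- `F ⊗ A` is a localization of `P ⊗ A` when `F` is the fraction field of `P`. -/
theorem isReduced_tensor_fractionRing {K A F : Type*} (P : Type*) [Field K] [CommRing P] [Field F]
    [Algebra K P] [Algebra K F] [Algebra P F] [IsScalarTower K P F] [IsFractionRing P F]
    [CommRing A] [Algebra K A] [IsReduced (P ⊗[K] A)] : IsReduced (F ⊗[K] A) := by
  let M := Algebra.algebraMapSubmonoid (P ⊗[K] A) (nonZeroDivisors P)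
  have hF : IsReduced ((P ⊗[K] A) ⊗[P] F) :=
    isReduced_of_injective
      (IsLocalization.algEquiv M ((P ⊗[K] A) ⊗[P] F) (Localization M)) (AlgEquiv.injective _)
  exact isReduced_of_injective
    ((Algebra.TensorProduct.cancelBaseChange K P P F A).symm.trans
      (Algebra.TensorProduct.comm P _ _)) (AlgEquiv.injective _)

theorem isReduced_tensor_tower {K A L : Type*} (F : Type*) [Field K] [Field F] [Field L]
    [Algebra K F] [Algebra K L] [Algebra F L] [IsScalarTower K F L] [Algebra.IsSeparable F L]
    [CommRing A] [Algebra K A] [IsReduced (F ⊗[K] A)] : IsReduced (L ⊗[K] A) := by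
  have : IsReduced ((F ⊗[K] A) ⊗[F] L) := isReduced_tensor_separable
  exact isReduced_of_injective
    ((Algebra.TensorProduct.cancelBaseChange K F F L A).symm.trans
      (Algebra.TensorProduct.comm F _ _)) (AlgEquiv.injective _)

open scoped IntermediateField.algebraAdjoinAdjoin in
/-- Over a field of characteristic zero every reduced algebra stays reduced under extension of
scalars to an arbitrary field `L`: split `L / K` into a purely transcendental extension followed
by an algebraic, hence separable, one. -/
theorem isReduced_tensor {K A L : Type*} [Field K] [CharZero K] [Field L] [Algebra K L]
    [CommRing A] [Algebra K A] [IsReduced A] : IsReduced (L ⊗[K] A) := by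
  obtain ⟨ι, x, hx⟩ := exists_isTranscendenceBasis' K L
  let P := Algebra.adjoin K (Set.range x)
  let F := IntermediateField.adjoin K (Set.range x)
  have : Algebra.IsAlgebraic F L := hx.isAlgebraic_field
  have hP : IsReduced (P ⊗[K] A) :=
    isReduced_of_injective
      (((Algebra.TensorProduct.congr hx.1.aevalEquiv.symm (AlgEquiv.refl (R := K) (A₁ := A))).trans
        (Algebra.TensorProduct.comm K _ _)).trans
        ((MvPolynomial.algebraTensorAlgEquiv K A).restrictScalars K)) (AlgEquiv.injective _)
  have hF : IsReduced (F ⊗[K] A) := isReduced_tensor_fractionRing P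
  exact isReduced_tensor_tower F

/-- **Base change, radicals.**
Let `K ⊆ K'` be an extension of fields of characteristic `0` and `I` an ideal of
`K[x₁,…,xₙ]`.  Then the radical commutes with the extension of scalars:
`√(I·K'[x₁,…,xₙ]) = (√I)·K'[x₁,…,xₙ]`. -/
theorem radical_base_change
    (K K' : Type*) [Field K] [Field K'] [Algebra K K'] [CharZero K]
    (n : ℕ) (I : Ideal (MvPolynomial (Fin n) K)) :
    (Ideal.map (MvPolynomial.map (algebraMap K K')) I).radical
      = Ideal.map (MvPolynomial.map (algebraMap K K')) I.radical := by
  apply le_antisymm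
  · let T := MvPolynomial (Fin n) K
    have : IsReduced (T ⧸ I.radical) :=
      (Ideal.isRadical_iff_quotient_reduced _).1 (Ideal.radical_isRadical I)
    have h1 : IsReduced (K' ⊗[K] (T ⧸ I.radical)) := isReduced_tensor
    have h2 : (I.radical.map
        (Algebra.TensorProduct.includeRight : T →ₐ[K] K' ⊗[K] T)).IsRadical :=
      (Ideal.isRadical_iff_quotient_reduced _).2 <| isReduced_of_injective
        (Algebra.TensorProduct.tensorQuotientEquiv (R := K) K' T K' I.radical).symm
        (AlgEquiv.injective _)
    let e : K' ⊗[K] T ≃ₐ[K'] MvPolynomial (Fin n) K' := MvPolynomial.algebraTensorAlgEquiv K K'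
    have h3 : Ideal.map (MvPolynomial.map (algebraMap K K')) I.radical
        = (I.radical.map (Algebra.TensorProduct.includeRight : T →ₐ[K] K' ⊗[K] T)).comap
          (e.symm : MvPolynomial (Fin n) K' →+* K' ⊗[K] T) := by
      rw [show Ideal.comap (e.symm : MvPolynomial (Fin n) K' →+* K' ⊗[K] T) _ = _ from
        Ideal.comap_symm e.toRingEquiv]
      change _ = Ideal.map (e.toRingEquiv : K' ⊗[K] T →+* MvPolynomial (Fin n) K') (Ideal.map
        (Algebra.TensorProduct.includeRight : T →ₐ[K] K' ⊗[K] T).toRingHom I.radical)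
      rw [Ideal.map_map]
      congr 1
      refine RingHom.ext fun p => ?_
      change _ = MvPolynomial.algebraTensorAlgEquiv K K' (1 ⊗ₜ[K] p)
      rw [MvPolynomial.algebraTensorAlgEquiv_tmul, one_smul]
    rw [(h3 ▸ h2.comap _ : Ideal.IsRadical _).radical_le_iff]
    exact Ideal.map_mono Ideal.le_radical
  · exact Ideal.map_radical_le _
end

section
/- Let K ⊆ K' be an extension of fields of characteristic 0, I ≤ K[x₁,…,xₙ] an ideal, A = K[x₁,…,xₙ]/I, A' = K'[x₁,…,xₙ]/(I·K'[x₁,…,xₙ]), and let p ≤ A be a prime ideal. Then the localization A_p is a regular local ring if and only if the localization A'_P is a regular local ring for one (equivalently, for every) prime ideal P of A' that is minimal over the extension p·A'. -/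
/-!
Write `A → A'` for the map of the theorem. It is a base change of `K → K'`, so it is flat. Going-down
for flat maps shows that a prime `P` minimal over `pA'` lies over `p` and has the same height, so
`A_p` and `A'_P` have the same dimension. In characteristic zero `K' ⊗ (A/p)` is reduced
(`isReduced_field_tensor_domain`), i.e. `pA'` is radical; localizing at the minimal prime `P`, the
maximal ideal of `A'_P` is the extension of the maximal ideal of `A_p`. By flatness these two
maximal ideals then have the same minimal number of generators
(`spanFinrank_maximalIdeal_eq_of_flat`). Regularity is the equality of this number with the
dimension, so it holds for one ring exactly when it holds for the other.
-/

/-- A commutative ring `R` is a *regular local ring* if it is Noetherian and local and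
its maximal ideal can be generated by `dim R` many elements (by Krull's height theorem
this number of generators is then minimal, i.e. `dim_κ m/m² = dim R`). -/
def IsRegularLocal (R : Type*) [CommRing R] : Prop :=
  IsNoetherianRing R ∧ ∃ (h : IsLocalRing R) (s : Finset R),
    Ideal.span (s : Set R) = @IsLocalRing.maximalIdeal R _ h ∧
    (s.card : WithBot (WithTop ℕ)) = ringKrullDim R

section

open TensorProduct IsLocalRing

/-! ### Reducedness of base changes of domains in characteristic zero -/

/-- In characteristic zero an algebraic extension is separable, and a finite separable extension is
unramified, so it stays reduced after extending scalars to any field; the general algebraic case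
is a direct limit of finite ones. -/
theorem isReduced_tensor_of_isAlgebraic (F M E : Type*) [Field F] [Field M] [Field E]
    [Algebra F M] [Algebra F E] [CharZero F] [Algebra.IsAlgebraic F E] :
    IsReduced (M ⊗[F] E) := by
  refine IsReduced.tensorProduct_of_flat_of_forall_fg fun B hB => ?_
  have : Algebra.FiniteType F B := B.fg_iff_finiteType.mp hB
  -- A subalgebra of the algebraic extension `E` is an intermediate field.
  have : Algebra.FormallyUnramified F B := by
    let B' : IntermediateField F E := B.toIntermediateField fun x hx => B.inv_mem_of_algebraic
      (x := ⟨x, hx⟩) (Algebra.IsAlgebraic.isAlgebraic x)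
    exact Algebra.FormallyUnramified.of_isSeparable F B'
  exact Algebra.FormallyUnramified.isReduced_of_field M (M ⊗[F] B)

/-- The previous lemma with the field `M` replaced by a domain `N`, embedded in its fraction
field. -/
theorem isReduced_tensor_domain_of_isAlgebraic (F N E : Type*) [Field F] [CommRing N] [IsDomain N]
    [Field E] [Algebra F N] [Algebra F E] [CharZero F] [Algebra.IsAlgebraic F E] :
    IsReduced (N ⊗[F] E) := by
  have := isReduced_tensor_of_isAlgebraic F (FractionRing N) E
  refine isReduced_of_injective
    (Algebra.TensorProduct.map (IsScalarTower.toAlgHom F N (FractionRing N)) (AlgHom.id F E)) ?_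
  exact Module.Flat.rTensor_preserves_injective_linearMap (M := E)
    (IsScalarTower.toAlgHom F N (FractionRing N)).toLinearMap
    (IsFractionRing.injective N (FractionRing N))

/-- If `F` is the fraction field of `S`, then `F ⊗[K] D` is a localization of `S ⊗[K] D`, hence
inherits the property of being a domain. -/
theorem isDomain_fractionField_tensor (K S F D : Type*) [Field K] [CommRing S] [IsDomain S]
    [Field F] [Algebra K S] [Algebra K F] [Algebra S F] [IsScalarTower K S F] [IsFractionRing S F]
    [CommRing D] [IsDomain D] [Algebra K D] [IsDomain (S ⊗[K] D)] : IsDomain (F ⊗[K] D) := by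
  let f : S ⊗[K] D →ₐ[S] F ⊗[K] D :=
    Algebra.TensorProduct.map (Algebra.ofId S F) (AlgHom.id K D)
  let : Algebra (S ⊗[K] D) (F ⊗[K] D) := RingHom.toAlgebra f.toRingHom
  have : IsScalarTower S (S ⊗[K] D) (F ⊗[K] D) := .of_algebraMap_eq fun x => (f.commutes x).symm
  have := IsLocalization.tensorProduct_tensorProduct K D (nonZeroDivisors S) F
    (RingHom.ext fun x => by
      change f (1 ⊗ₜ x) = 1 ⊗ₜ x
      simp [f])
  refine IsLocalization.isDomain_of_le_nonZeroDivisors (R := S ⊗[K] D) (F ⊗[K] D)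
    (M := Algebra.algebraMapSubmonoid (S ⊗[K] D) (nonZeroDivisors S)) ?_
  rintro _ ⟨s, hs, rfl⟩
  refine mem_nonZeroDivisors_of_ne_zero ?_
  have hinj : Function.Injective (algebraMap S (S ⊗[K] D)) :=
    Algebra.TensorProduct.includeLeft_injective (S := S) (algebraMap K D).injective
  exact (map_ne_zero_iff _ hinj).mpr (nonZeroDivisors.ne_zero hs)

open scoped IntermediateField.algebraAdjoinAdjoin in
/-- A purely transcendental extension of `K` tensored with a domain is a domain, being a localization
of a polynomial ring over `D`. -/
theorem isDomain_adjoin_tensor {K E ι : Type*} [Field K] [Field E] [Algebra K E] {v : ι → E}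
    (hv : AlgebraicIndependent K v) (D : Type*) [CommRing D] [IsDomain D] [Algebra K D] :
    IsDomain (IntermediateField.adjoin K (Set.range v) ⊗[K] D) := by
  have e : (Algebra.adjoin K (Set.range v) ⊗[K] D) ≃ₐ[K] MvPolynomial ι D :=
    (Algebra.TensorProduct.comm K _ D).trans <|
      (Algebra.TensorProduct.congr AlgEquiv.refl hv.aevalEquiv.symm).trans
        ((MvPolynomial.algebraTensorAlgEquiv K D).restrictScalars K)
  have : IsDomain (Algebra.adjoin K (Set.range v) ⊗[K] D) := e.toMulEquiv.isDomain _
  exact isDomain_fractionField_tensor K (Algebra.adjoin K (Set.range v)) _ D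

theorem isReduced_tensor_of_tower (K F E D : Type*) [Field K] [Field F] [Field E] [Algebra K F]
    [Algebra F E] [Algebra K E] [IsScalarTower K F E] [CharZero F] [Algebra.IsAlgebraic F E]
    [CommRing D] [Algebra K D] [IsDomain (F ⊗[K] D)] : IsReduced (E ⊗[K] D) := by
  have := isReduced_tensor_domain_of_isAlgebraic F (F ⊗[K] D) E
  let e : (F ⊗[K] D) ⊗[F] E ≃ₐ[F] E ⊗[K] D :=
    (Algebra.TensorProduct.comm F (F ⊗[K] D) E).trans
      ((Algebra.TensorProduct.cancelBaseChange K F E E D).restrictScalars F)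
  exact isReduced_of_injective e.symm e.symm.injective

/-- In characteristic zero a domain over `K` is geometrically reduced. A transcendence basis splits
`E` into a purely transcendental extension of `K` followed by an algebraic one. -/
theorem isReduced_field_tensor_domain (K E D : Type*) [Field K] [CharZero K] [Field E] [Algebra K E]
    [CommRing D] [IsDomain D] [Algebra K D] : IsReduced (E ⊗[K] D) := by
  obtain ⟨ι, v, hv⟩ := exists_isTranscendenceBasis' K E
  have : Algebra.IsAlgebraic (IntermediateField.adjoin K (Set.range v)) E := hv.isAlgebraic_field
  have := isDomain_adjoin_tensor hv.1 D
  have : CharZero (IntermediateField.adjoin K (Set.range v)) :=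
    charZero_of_injective_algebraMap (algebraMap K _).injective
  exact isReduced_tensor_of_tower K (IntermediateField.adjoin K (Set.range v)) E D

/-! ### Regularity along flat local homomorphisms -/

/-- For a flat local homomorphism with `m_R S = m_S`, flatness gives `m_S ≅ S ⊗ m_R`, so that
`κ(S) ⊗ m_S ≅ κ(S) ⊗ m_R` and, by Nakayama, both maximal ideals need the same number of
generators. -/
theorem spanFinrank_maximalIdeal_eq_of_flat (R S : Type*) [CommRing R] [CommRing S] [IsLocalRing R]
    [IsLocalRing S] [IsNoetherianRing R] [IsNoetherianRing S] [Algebra R S] [Module.Flat R S]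
    [IsLocalHom (algebraMap R S)]
    (h : (maximalIdeal R).map (algebraMap R S) = maximalIdeal S) :
    (maximalIdeal S).spanFinrank = (maximalIdeal R).spanFinrank := by
  let f : S ⊗[R] maximalIdeal R →ₗ[S] S :=
    (AlgebraTensorModule.rid R S S).toLinearMap ∘ₗ
      AlgebraTensorModule.lTensor S S (maximalIdeal R).subtype
  have hf : Function.Injective f := by
    refine (AlgebraTensorModule.rid R S S).injective.comp ?_
    exact Module.Flat.lTensor_preserves_injective_linearMap (M := S) _ Subtype.val_injective
  have hr : LinearMap.range f = maximalIdeal S := by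
    rw [← h]
    apply le_antisymm
    · rintro _ ⟨x, rfl⟩
      induction x with
      | zero => simp
      | add x y hx hy => rw [map_add]; exact add_mem hx hy
      | tmul s x =>
        simp only [f, LinearMap.comp_apply, AlgebraTensorModule.lTensor_tmul,
          LinearEquiv.coe_coe, AlgebraTensorModule.rid_tmul, Submodule.subtype_apply]
        rw [Algebra.smul_def]
        exact Ideal.mul_mem_right _ _ (Ideal.mem_map_of_mem _ x.2)
    · refine Ideal.map_le_iff_le_comap.mpr fun x hx => ⟨1 ⊗ₜ ⟨x, hx⟩, ?_⟩
      simp [f, Algebra.smul_def]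
  let e : S ⊗[R] maximalIdeal R ≃ₗ[S] maximalIdeal S :=
    (LinearEquiv.ofInjective f hf).trans (LinearEquiv.ofEq _ _ hr)
  have hR : (maximalIdeal R).FG := IsNoetherian.noetherian _
  have hS : (maximalIdeal S).FG := IsNoetherian.noetherian _
  rw [← TensorProduct.spanFinrank_top_eq_of_residueField _ hR,
    ← TensorProduct.spanFinrank_top_eq_of_residueField _ hS,
    ← Module.finrank_eq_spanFinrank_of_free, ← Module.finrank_eq_spanFinrank_of_free]
  let e1 : ResidueField S ⊗[S] maximalIdeal S ≃ₗ[ResidueField S]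
      ResidueField S ⊗[S] (S ⊗[R] maximalIdeal R) :=
    AlgebraTensorModule.congr (LinearEquiv.refl _ _) e.symm
  let e2 := AlgebraTensorModule.cancelBaseChange R S (ResidueField S) (ResidueField S)
    (maximalIdeal R)
  let e3 := AlgebraTensorModule.cancelBaseChange R (ResidueField R) (ResidueField S)
    (ResidueField S) (maximalIdeal R)
  exact (e1.trans (e2.trans e3.symm)).finrank_eq.trans Module.finrank_baseChange

/-- Krull's height theorem gives `dim R ≤ spanFinrank m`, so a generating set with `dim R` elements
exists exactly when equality holds. -/
theorem isRegularLocal_iff_spanFinrank (R : Type*) [CommRing R] [IsLocalRing R]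
    [IsNoetherianRing R] :
    IsRegularLocal R ↔ ((maximalIdeal R).spanFinrank : WithBot ℕ∞) = ringKrullDim R := by
  constructor
  · rintro ⟨-, _, s, hs, hc⟩
    refine le_antisymm ?_ (ringKrullDim_le_spanFinrank_maximalIdeal R)
    rw [← hc, ← hs]
    have := Submodule.spanFinrank_span_le_ncard_of_finite (R := R) s.finite_toSet
    rw [Set.ncard_coe_finset] at this
    exact Nat.cast_le.mpr this
  · intro h
    obtain ⟨s, hc, hs⟩ := Submodule.FG.exists_span_finset_card_eq_spanFinrank
      (IsNoetherian.noetherian (maximalIdeal R))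
    exact ⟨inferInstance, inferInstance, s, hs, by rw [hc]; exact h⟩

/-- Regularity passes both ways along a flat map at a prime `P` minimal over `pB`, provided `pB` is
radical. Going-down makes `P` lie over `p` with the same height, and radicality makes the maximal
ideal of `B_P` the extension of that of `A_p`. -/
theorem isRegularLocal_localization_iff (A B : Type*) [CommRing A] [CommRing B]
    [IsNoetherianRing A] [IsNoetherianRing B] [Algebra A B] [Module.Flat A B]
    (p : Ideal A) [p.IsPrime] (P : Ideal B) [P.IsPrime]
    (hP : P ∈ (p.map (algebraMap A B)).minimalPrimes)
    (hrad : (p.map (algebraMap A B)).IsRadical) :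
    IsRegularLocal (Localization.AtPrime p) ↔ IsRegularLocal (Localization.AtPrime P) := by
  -- Going-down produces a prime below `P` over `p`; it contains `pB`, so it is `P` by minimality.
  have hover : P.LiesOver p := by
    have hle : p ≤ P.under A := Ideal.map_le_iff_le_comap.mp hP.1.2
    obtain ⟨Q, hQP, hQ, hQp⟩ := Ideal.exists_ideal_le_liesOver_of_le (S := B) P hle
    have hQ' : Q = P := le_antisymm hQP
      (hP.2 ⟨hQ, Ideal.map_le_iff_le_comap.mpr hQp.over.le⟩ hQP)
    exact hQ' ▸ hQp
  have hheight : P.height = p.height := by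
    -- The fibre contribution to the height vanishes, since `P / pB` is a minimal prime of `B / pB`.
    rw [Ideal.height_eq_height_add_of_liesOver_of_hasGoingDown p P]
    have hmem : P.map (Ideal.Quotient.mk (p.map (algebraMap A B))) ∈
        minimalPrimes (B ⧸ p.map (algebraMap A B)) := by
      have := Ideal.minimalPrimes_map_of_surjective
        (Ideal.Quotient.mk_surjective (I := p.map (algebraMap A B))) (p.map (algebraMap A B))
      rw [Ideal.map_quotient_self, Ideal.mk_ker, sup_idem] at this
      change _ ∈ (⊥ : Ideal _).minimalPrimes
      exact this ▸ Set.mem_image_of_mem _ hP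
    have := hmem.isPrime
    rw [Ideal.height_eq_zero_iff.mpr hmem, add_zero]
  let f := Localization.localRingHom p P (algebraMap A B) hover.over
  have hflat : f.Flat := RingHom.Flat.localRingHom (RingHom.flat_algebraMap_iff.mpr ‹_›) _ _ _
  let : Algebra (Localization.AtPrime p) (Localization.AtPrime P) := f.toAlgebra
  have : Module.Flat (Localization.AtPrime p) (Localization.AtPrime P) := hflat
  have : IsLocalHom (algebraMap (Localization.AtPrime p) (Localization.AtPrime P)) :=
    Localization.isLocalHom_localRingHom p P (algebraMap A B) hover.over
  have hmax : (maximalIdeal (Localization.AtPrime p)).map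
      (algebraMap (Localization.AtPrime p) (Localization.AtPrime P)) =
      maximalIdeal (Localization.AtPrime P) := by
    -- The radical of `p B_P` is the maximal ideal because `P` is minimal over `pB`.
    rw [← Localization.AtPrime.map_eq_maximalIdeal, ← Localization.AtPrime.map_eq_maximalIdeal,
      ← IsLocalization.AtPrime.radical_map_of_mem_minimalPrimes (Localization.AtPrime P) P _ hP,
      ← IsLocalization.map_radical P.primeCompl, hrad.radical, Ideal.map_map, Ideal.map_map]
    congr 1
    ext x
    exact Localization.localRingHom_to_map p P (algebraMap A B) hover.over x
  rw [isRegularLocal_iff_spanFinrank, isRegularLocal_iff_spanFinrank,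
    spanFinrank_maximalIdeal_eq_of_flat _ _ hmax,
    IsLocalization.AtPrime.ringKrullDim_eq_height p, IsLocalization.AtPrime.ringKrullDim_eq_height P,
    hheight]

/-! ### Base change of affine algebras -/

/-- The identification `K' ⊗ (K[x]/J) ≅ K'[x]/J K'[x]`, compatible with the maps from `K[x]`. -/
theorem exists_ringEquiv (K K' : Type*) [Field K] [Field K'] [Algebra K K'] (σ : Type*)
    (J : Ideal (MvPolynomial σ K)) :
    ∃ e : K' ⊗[K] (MvPolynomial σ K ⧸ J) ≃+*
        MvPolynomial σ K' ⧸ J.map (MvPolynomial.map (algebraMap K K')),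
      ∀ r, e (1 ⊗ₜ Ideal.Quotient.mk J r) =
        Ideal.Quotient.mk _ (MvPolynomial.map (algebraMap K K') r) := by
  let e₀ := (MvPolynomial.algebraTensorAlgEquiv (σ := σ) K K').toRingEquiv
  let i : MvPolynomial σ K →+* K' ⊗[K] MvPolynomial σ K :=
    (Algebra.TensorProduct.includeRight (R := K) (A := K')).toRingHom
  have hi : (e₀ : K' ⊗[K] MvPolynomial σ K →+* MvPolynomial σ K').comp i =
      MvPolynomial.map (algebraMap K K') := by
    refine RingHom.ext fun x => ?_
    exact (MvPolynomial.algebraTensorAlgEquiv_tmul K K' 1 x).trans (one_smul _ _)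
  let e₁ := (Algebra.TensorProduct.tensorQuotientEquiv (R := K) K' (MvPolynomial σ K) K' J)
  let e₂ := Ideal.quotientEquiv (J.map i) (J.map (MvPolynomial.map (algebraMap K K'))) e₀
    (by rw [← hi, ← Ideal.map_map])
  refine ⟨e₁.toRingEquiv.trans e₂, fun r => ?_⟩
  exact congrArg (Ideal.Quotient.mk _) (RingHom.congr_fun hi r)

theorem flat_of_tensor_equiv (K K' A B : Type*) [Field K] [Field K'] [Algebra K K'] [CommRing A]
    [Algebra K A] [CommRing B] (e : K' ⊗[K] A ≃+* B) (g : A →+* B)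
    (h : ∀ a, e (1 ⊗ₜ a) = g a) : g.Flat := by
  let c : A ⊗[K] K' ≃+* K' ⊗[K] A := (Algebra.TensorProduct.comm K A K').toRingEquiv
  have hg : g = ((c.trans e : A ⊗[K] K' ≃+* B) : A ⊗[K] K' →+* B).comp
      (algebraMap A (A ⊗[K] K')) := RingHom.ext fun a => (h a).symm
  rw [hg]
  exact RingHom.Flat.comp (RingHom.flat_algebraMap_iff.mpr inferInstance)
    (RingHom.Flat.of_bijective (c.trans e).bijective)

theorem flat_quotientMap (K K' : Type*) [Field K] [Field K'] [Algebra K K'] (σ : Type*)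
    (I : Ideal (MvPolynomial σ K)) :
    (Ideal.quotientMap (I.map (MvPolynomial.map (algebraMap K K')))
      (MvPolynomial.map (algebraMap K K')) Ideal.le_comap_map).Flat := by
  obtain ⟨e, he⟩ := exists_ringEquiv K K' σ I
  refine flat_of_tensor_equiv K K' _ _ e _ fun a => ?_
  obtain ⟨r, rfl⟩ := Ideal.Quotient.mk_surjective a
  exact he r

/-- The extension of a prime `p` is radical: with `q` the preimage of `p` in `K[x]`, the quotient
`K'[x]/q K'[x]` is `K' ⊗ (K[x]/q)`, which is reduced. -/
theorem isRadical_map_prime (K K' : Type*) [Field K] [CharZero K] [Field K'] [Algebra K K']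
    (σ : Type*) (I : Ideal (MvPolynomial σ K)) (p : Ideal (MvPolynomial σ K ⧸ I)) [p.IsPrime] :
    (p.map (Ideal.quotientMap (I.map (MvPolynomial.map (algebraMap K K')))
      (MvPolynomial.map (algebraMap K K')) Ideal.le_comap_map)).IsRadical := by
  let φ := MvPolynomial.map (σ := σ) (algebraMap K K')
  let q := p.comap (Ideal.Quotient.mk I)
  have hq : (q.map φ).IsRadical := by
    obtain ⟨e, -⟩ := exists_ringEquiv K K' σ q
    have := isReduced_field_tensor_domain K K' (MvPolynomial σ K ⧸ q)
    exact (Ideal.isRadical_iff_quotient_reduced _).mpr (isReduced_of_injective e.symm e.symm.injective)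
  have hIq : I ≤ q := fun x hx => by
    simp [q, Ideal.Quotient.eq_zero_iff_mem.mpr hx]
  have hp : p.map (Ideal.quotientMap (I.map φ) φ Ideal.le_comap_map) =
      (q.map φ).map (Ideal.Quotient.mk (I.map φ)) := by
    conv_lhs => rw [← Ideal.map_comap_of_surjective _ Ideal.Quotient.mk_surjective p]
    rw [Ideal.map_map, Ideal.map_map, Ideal.quotientMap_comp_mk]
  rw [hp]
  rintro x ⟨n, hn⟩
  obtain ⟨y, rfl⟩ := Ideal.Quotient.mk_surjective x
  have hIq' : I.map φ ≤ q.map φ := Ideal.map_mono hIq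
  rw [← map_pow, ← Ideal.mem_comap, Ideal.comap_map_mk hIq'] at hn
  exact Ideal.mem_map_of_mem _ (hq ⟨n, hn⟩)

end

/-- **Base change and regularity.**
Let `K ⊆ K'` be fields of characteristic `0`, `I ≤ K[x₁,…,xₙ]` an ideal,
`A = K[x₁,…,xₙ]/I`, `A' = K'[x₁,…,xₙ]/(I·K'[x₁,…,xₙ])` and `p ≤ A` a prime ideal.
Then `A_p` is a regular local ring if and only if `A'_P` is a regular local ring
for one (equivalently, every) prime `P` of `A'` minimal over the extension `p·A'`. -/
theorem regular_iff_regular_base_change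
    (K K' : Type*) [Field K] [Field K'] [Algebra K K'] [CharZero K]
    (n : ℕ) (I : Ideal (MvPolynomial (Fin n) K))
    (p : Ideal (MvPolynomial (Fin n) K ⧸ I)) [p.IsPrime]
    (P : Ideal (MvPolynomial (Fin n) K' ⧸
        Ideal.map (MvPolynomial.map (algebraMap K K')) I)) [P.IsPrime]
    (hP : P ∈ (Ideal.map
        (Ideal.quotientMap (Ideal.map (MvPolynomial.map (algebraMap K K')) I)
          (MvPolynomial.map (algebraMap K K')) Ideal.le_comap_map) p).minimalPrimes) :
    IsRegularLocal (Localization.AtPrime p) ↔ IsRegularLocal (Localization.AtPrime P) := by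
  let f := Ideal.quotientMap (Ideal.map (MvPolynomial.map (algebraMap K K')) I)
    (MvPolynomial.map (algebraMap K K')) Ideal.le_comap_map
  let : Algebra (MvPolynomial (Fin n) K ⧸ I)
    (MvPolynomial (Fin n) K' ⧸ Ideal.map (MvPolynomial.map (algebraMap K K')) I) := f.toAlgebra
  have : Module.Flat (MvPolynomial (Fin n) K ⧸ I)
      (MvPolynomial (Fin n) K' ⧸ Ideal.map (MvPolynomial.map (algebraMap K K')) I) :=
    flat_quotientMap K K' (Fin n) I
  exact isRegularLocal_localization_iff _ _ p P hP (isRadical_map_prime K K' (Fin n) I p)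
end

section
/- Let X ⊆ ℝⁿ be a real algebraic set, i.e. X = V_ℝ(I) for some ideal I ≤ ℝ[x₁,…,xₙ], and let p ∈ X. Then p is an analytic manifold point of X if and only if p is a smooth manifold point of X. -/
/-!
The substance is that a smooth chart of a real algebraic set `X = V(I)` can be replaced by an
analytic one. Near `p` the set `X` is the graph of a smooth map over its tangent space, i.e. there are
linear coordinates `L` and a smooth parametrization `Γ` of `X` such that `Γ y` is, locally, the only
point of `X` whose first `d` coordinates `(L x)_i` are those of `y` (`exists_parametrization`). If `Γ`
is analytic, a shear along the graph is an analytic chart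
(`isAnalyticManifoldPointAt_of_parametrization`).

Analyticity of `Γ` rests on three facts.

* `exists_annihilator_of_isolated_zero`: isolated zeros of a family of nonnegative polynomials `Q_t`
  depending polynomially on `t` are algebraic over `ℝ(t)`. Such a zero is a limit, as `δ → ∞`, of
  critical points of `∑ x_i ^ (D + 1) / (D + 1) + δ Q_t`. For `D` large these solve a system that is
  monic over `ℝ[t, δ]`, hence their coordinates satisfy a monic equation over `ℝ[t, δ]`, whose leading
  coefficient in `δ` annihilates the limit.
* `analyticAt_of_algebraic`: a smooth function of one variable that is algebraic over `ℝ(t)` is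
  analytic. Subtracting a long Taylor polynomial and rescaling turns the algebraic equation into one to
  which the analytic implicit function theorem applies.
* `analyticAt_of_analyticAt_lines` (Bochnak–Siciak): a smooth function that is analytic on all lines is
  analytic, by Baire's theorem and polarization.

For points `a` and vectors `v`, `Γ (a + t v)` is the isolated zero of the sum of the squares of
generators of `I` and of the linear equations `(L x)_i = (a + t v)_i`, `i < d`. So the coordinates of
`Γ` are smooth and, along every line, algebraic; the three facts give their analyticity.
-/

/-- A point `p` of a set `X ⊆ ℝⁿ` is an *analytic manifold point* of `X` (of dimension `d`)
if there are open sets `U, V ⊆ ℝⁿ` with `p ∈ U` and a bijection `φ : U → V` such that both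
`φ` and its inverse `ψ` are real-analytic and
`X ∩ U = { x ∈ U : φ_{d+1}(x) = … = φ_n(x) = 0 }`. -/
def IsAnalyticManifoldPointAt {n : ℕ} (X : Set (Fin n → ℝ)) (p : Fin n → ℝ) : Prop :=
  ∃ (d : ℕ) (U V : Set (Fin n → ℝ)) (φ ψ : (Fin n → ℝ) → (Fin n → ℝ)),
    IsOpen U ∧ IsOpen V ∧ p ∈ U ∧
    AnalyticOnNhd ℝ φ U ∧ AnalyticOnNhd ℝ ψ V ∧
    Set.MapsTo φ U V ∧ Set.MapsTo ψ V U ∧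
    (∀ x ∈ U, ψ (φ x) = x) ∧ (∀ y ∈ V, φ (ψ y) = y) ∧
    X ∩ U = { x ∈ U | ∀ i : Fin n, d ≤ (i : ℕ) → φ x i = 0 }

/-- A point `p` of a set `X ⊆ ℝⁿ` is a *smooth manifold point* of `X` (of dimension `d`)
if there are open sets `U, V ⊆ ℝⁿ` with `p ∈ U` and a bijection `φ : U → V` such that both
`φ` and its inverse `ψ` are `C^∞` and `X ∩ U = { x ∈ U : φ_{d+1}(x) = … = φ_n(x) = 0 }`. -/
def IsSmoothManifoldPointAt {n : ℕ} (X : Set (Fin n → ℝ)) (p : Fin n → ℝ) : Prop :=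
  ∃ (d : ℕ) (U V : Set (Fin n → ℝ)) (φ ψ : (Fin n → ℝ) → (Fin n → ℝ)),
    IsOpen U ∧ IsOpen V ∧ p ∈ U ∧
    ContDiffOn ℝ (⊤ : ℕ∞) φ U ∧ ContDiffOn ℝ (⊤ : ℕ∞) ψ V ∧
    Set.MapsTo φ U V ∧ Set.MapsTo ψ V U ∧
    (∀ x ∈ U, ψ (φ x) = x) ∧ (∀ y ∈ V, φ (ψ y) = y) ∧
    X ∩ U = { x ∈ U | ∀ i : Fin n, d ≤ (i : ℕ) → φ x i = 0 }

/-- The real zero set `V_ℝ(I) ⊆ ℝⁿ` of an ideal `I ≤ ℝ[x₁,…,xₙ]`. -/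
def realZeroSet {n : ℕ} (I : Ideal (MvPolynomial (Fin n) ℝ)) : Set (Fin n → ℝ) :=
  { p | ∀ f ∈ I, MvPolynomial.aeval p f = 0 }

/-! ### Smooth algebraic functions of one variable -/

section

open Polynomial Filter Topology Asymptotics
open scoped ContDiff

/-- A polynomial which is `o(t ^ k)` at the origin vanishes there to order at least `k + 1`. -/
lemma X_pow_dvd_of_isLittleO (a : ℝ[X]) (k : ℕ)
    (h : (fun t => a.eval t) =o[𝓝[≠] (0 : ℝ)] (fun t => t ^ k)) : X ^ (k + 1) ∣ a := by
  by_cases ha : a = 0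
  · simp [ha]
  obtain ⟨q, hq, hq0⟩ := exists_eq_pow_rootMultiplicity_mul_and_not_dvd a ha 0
  set m := rootMultiplicity 0 a
  simp only [map_zero, sub_zero] at hq hq0
  by_cases hm : k + 1 ≤ m
  · rw [hq]; exact (pow_dvd_pow X hm).mul_right q
  exfalso
  have h1 : (fun t : ℝ => t ^ k) =O[𝓝[≠] (0 : ℝ)] (fun t => t ^ m) :=
    IsBigO.of_bound 1 (by
      filter_upwards [mem_nhdsWithin_of_mem_nhds (Metric.ball_mem_nhds (0:ℝ) one_pos)] with t ht
      have ht1 : |t| ≤ 1 := by simpa using (Metric.mem_ball.1 ht).le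
      simpa using pow_le_pow_of_le_one (abs_nonneg t) ht1 (by omega : m ≤ k))
  have h2 := h.trans_isBigO h1
  rw [isLittleO_iff_tendsto' (by
    filter_upwards [self_mem_nhdsWithin] with t ht h0
    exact absurd (eq_zero_of_pow_eq_zero h0) ht)] at h2
  have h3 : Tendsto (fun t => q.eval t) (𝓝[≠] (0:ℝ)) (𝓝 0) := by
    refine h2.congr' ?_
    filter_upwards [self_mem_nhdsWithin] with t ht
    have : t ≠ 0 := ht
    rw [hq]; simp; field_simp
  have h4 : Tendsto (fun t => q.eval t) (𝓝[≠] (0:ℝ)) (𝓝 (q.eval 0)) :=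
    (q.continuous.tendsto 0).mono_left nhdsWithin_le_nhds
  have := tendsto_nhds_unique h3 h4
  apply hq0
  rw [X_dvd_iff, coeff_zero_eq_eval_zero, ← this]

lemma analytic_evalEval (P : ℝ[X][X]) :
    AnalyticOnNhd ℝ (fun x : ℝ × ℝ => P.evalEval x.1 x.2) Set.univ := by
  have : (fun x : ℝ × ℝ => P.evalEval x.1 x.2) =
      fun x : ℝ × ℝ => ∑ i ∈ Finset.range (P.natDegree + 1), (P.coeff i).eval x.1 * x.2 ^ i := by
    funext x
    rw [evalEval, eval_eq_sum_range (p := P)]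
    simp [eval_finsetSum]
  rw [this]
  intro x _
  apply Finset.analyticAt_fun_sum
  intro i _
  exact ((AnalyticOnNhd.eval_polynomial (P.coeff i) (𝕜 := ℝ) _ (Set.mem_univ _)).fun_comp analyticAt_fst).mul
    (analyticAt_snd.pow i)

lemma exists_taylor_poly (g : ℝ → ℝ) (hg : ContDiffAt ℝ ∞ g 0) (K : ℕ) :
    ∃ T : ℝ[X], (fun t => g t - T.eval t) =o[𝓝 (0:ℝ)] (fun t => t ^ K) := by
  obtain ⟨u, hu, hgu⟩ := (hg.of_le (m := K) (by exact_mod_cast le_top)).contDiffOn le_rfl (by simp)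
  obtain ⟨ε, hε, hεu⟩ := Metric.mem_nhds_iff.1 (by simpa using hu)
  have h := taylor_isLittleO (convex_ball (0:ℝ) ε) (Metric.mem_ball_self hε)
    (hgu.mono (by simpa using hεu))
  rw [nhdsWithin_eq_nhds.2 (Metric.ball_mem_nhds _ hε)] at h
  refine ⟨∑ k ∈ Finset.range (K+1), C (((k.factorial : ℝ)⁻¹) * iteratedDerivWithin k g (Metric.ball 0 ε) 0) * X ^ k, ?_⟩
  simp only [taylor_within_apply, sub_zero] at h
  refine h.congr_left fun t => ?_
  congr 1
  rw [eval_finsetSum]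
  exact Finset.sum_congr rfl fun i _ => by simp; ring

/-- A continuous solution `z` of `H (t, z t) = 0` through the origin is analytic there, as it coincides
with the implicit function of the analytic function `H`. -/
lemma analyticAt_of_implicit (H : ℝ × ℝ → ℝ) (hH : AnalyticAt ℝ H (0,0)) (h0 : H (0,0) = 0)
    (e : ℝ) (he : e ≠ 0) (hd : HasDerivAt (fun z => H (0, z)) e 0)
    (z : ℝ → ℝ) (hz0 : z 0 = 0) (hz : ContinuousAt z 0) (hHz : ∀ᶠ t in 𝓝 (0:ℝ), H (t, z t) = 0) :
    AnalyticAt ℝ z 0 := by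
  have hc : ContDiffAt ℝ ω H (0,0) := hH.contDiffAt
  have hinv : (fderiv ℝ H (0,0) ∘L .inr ℝ ℝ ℝ).IsInvertible := by
    have h1 : HasFDerivAt (fun z : ℝ => H (0, z)) (fderiv ℝ H (0,0) ∘L .inr ℝ ℝ ℝ) 0 :=
      HasFDerivAt.comp (f := fun z : ℝ => ((0:ℝ), z)) (g := H) 0 hH.differentiableAt.hasFDerivAt
        (hasFDerivAt_prodMk_right (0:ℝ) (0:ℝ))
    have h2 := h1.unique hd.hasFDerivAt
    rw [h2]
    refine ⟨ContinuousLinearEquiv.unitsEquivAut ℝ (Units.mk0 e he), ?_⟩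
    ext; simp
  have hω : (ω : WithTop ℕ∞) ≠ 0 := by simp
  have h1 := hc.eventually_apply_eq_iff_implicitFunction hω hinv
  have h2 : Tendsto (fun t => (t, z t)) (𝓝 0) (𝓝 ((0:ℝ), (0:ℝ))) := by
    have := (continuousAt_id (x := (0:ℝ))).prodMk hz
    simpa [ContinuousAt, hz0] using this
  have h3 : hc.implicitFunction hω hinv =ᶠ[𝓝 0] z := by
    filter_upwards [h2.eventually h1, hHz] with t ht ht'
    exact ht.1 (by rw [ht', h0])
  have h4 := hc.contDiffAt_implicitFunction hω hinv
  exact (h4.analyticAt).congr h3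

/-- A function annihilated by a nonzero bivariate polynomial is annihilated by some `P` that is
separable over `ℝ(t)`; after clearing denominators, separability reads `A P + B P' = c(t)` with
`c ≠ 0`. An annihilator of minimal degree works: if its square-free part were of smaller degree, that
part would be an annihilator as well. -/
lemma exists_separable_annihilator (g : ℝ → ℝ) (P₀ : ℝ[X][X]) (hP₀ : P₀ ≠ 0)
    (h₀ : ∀ᶠ t in 𝓝[≠] (0 : ℝ), P₀.evalEval t (g t) = 0) :
    ∃ (P A B : ℝ[X][X]) (c : ℝ[X]), c ≠ 0 ∧ A * P + B * derivative P = C c ∧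
      ∀ᶠ t in 𝓝[≠] (0 : ℝ), P.evalEval t (g t) = 0 := by
  classical
  let K := FractionRing ℝ[X]
  let S : Set ℝ[X][X] := {P | P ≠ 0 ∧ ∀ᶠ t in 𝓝[≠] (0 : ℝ), P.evalEval t (g t) = 0}
  have hinj : Function.Injective (algebraMap ℝ[X] K) := IsFractionRing.injective _ _
  have hinjm := Polynomial.map_injective _ hinj
  have hcne : ∀ c : ℝ[X], c ≠ 0 → ∀ᶠ t in 𝓝[≠] (0 : ℝ), c.eval t ≠ 0 := by
    intro c hc
    have : ((c.roots.toFinset : Set ℝ))ᶜ ∩ {0}ᶜ ∈ 𝓝[≠] (0:ℝ) := by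
      have hfin : ((c.roots.toFinset : Set ℝ) \ {0}).Finite :=
        (Finset.finite_toSet _).subset Set.sdiff_subset
      have := hfin.isClosed.isOpen_compl.mem_nhds (x := (0:ℝ)) (by simp)
      filter_upwards [mem_nhdsWithin_of_mem_nhds this, self_mem_nhdsWithin] with t ht ht'
      refine ⟨fun h => ht ⟨h, ht'⟩, ht'⟩
    filter_upwards [this] with t ht h0
    apply ht.1
    simp [hc, h0]
  obtain ⟨P, ⟨hP, hPv⟩, hmin⟩ : ∃ P ∈ S, ∀ Q ∈ S, P.natDegree ≤ Q.natDegree := by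
    have hne : (Polynomial.natDegree '' S).Nonempty := ⟨_, P₀, ⟨hP₀, h₀⟩, rfl⟩
    obtain ⟨P, hP, hPd⟩ := Nat.sInf_mem hne
    exact ⟨P, hP, fun Q hQ => hPd ▸ Nat.sInf_le ⟨Q, hQ, rfl⟩⟩
  have hsq : Squarefree (P.map (algebraMap ℝ[X] K)) := by
    rintro D ⟨E, hE⟩
    by_contra hD
    have hPK : P.map (algebraMap ℝ[X] K) ≠ 0 := by
      rwa [Ne, Polynomial.map_eq_zero_iff hinj]
    have hD0 : D ≠ 0 := by rintro rfl; simp at hE; exact hPK (by simpa using hE)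
    have hE0 : E ≠ 0 := by rintro rfl; simp at hE; exact hPK (by simpa using hE)
    have hDdeg : 0 < D.natDegree := by
      rw [Nat.pos_iff_ne_zero]
      intro h
      exact hD (Polynomial.isUnit_iff_degree_eq_zero.2
        (by rw [Polynomial.degree_eq_natDegree hD0, h]; rfl))
    obtain ⟨b, hb, hbW⟩ := IsLocalization.integerNormalization_spec (nonZeroDivisors ℝ[X]) (D * E)
    obtain ⟨e, he, heE⟩ := IsLocalization.integerNormalization_spec (nonZeroDivisors ℝ[X]) E
    set W := IsLocalization.integerNormalization (nonZeroDivisors ℝ[X]) (D * E) with hW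
    set E' := IsLocalization.integerNormalization (nonZeroDivisors ℝ[X]) E
    have hb0 := nonZeroDivisors.ne_zero hb
    have he0 := nonZeroDivisors.ne_zero he
    have hsm : ∀ (r : ℝ[X]) (p : K[X]), r • p = C (algebraMap ℝ[X] K r) * p := by
      intro r p
      rw [← Polynomial.smul_eq_C_mul, algebraMap_smul]
    have key : C e * W ^ 2 = C (b ^ 2) * E' * P := by
      apply hinjm
      simp only [Polynomial.map_mul, Polynomial.map_pow, Polynomial.map_C, hbW, heE, hE, hsm, map_pow]
      ring
    have hW0 : W ≠ 0 := by
      rw [hW, Ne, IsFractionRing.integerNormalization_eq_zero_iff]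
      exact mul_ne_zero hD0 hE0
    have hWdeg : W.natDegree < P.natDegree := by
      rw [← Polynomial.natDegree_map_eq_of_injective hinj W,
        ← Polynomial.natDegree_map_eq_of_injective hinj P, hbW, hE, hsm,
        Polynomial.natDegree_C_mul (by rwa [Ne, map_eq_zero_iff _ hinj]),
        natDegree_mul hD0 hE0, natDegree_mul (mul_ne_zero hD0 hD0) hE0, natDegree_mul hD0 hD0]
      omega
    refine absurd (hmin W ⟨hW0, ?_⟩) (by omega)
    filter_upwards [hPv, hcne e he0] with t ht ht'
    have := congrArg (Polynomial.evalEval t (g t)) key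
    simpa [Polynomial.evalEval_mul, Polynomial.evalEval_pow, Polynomial.evalEval_C, ht, ht'] using this
  have : CharZero K := charZero_of_injective_algebraMap hinj
  obtain ⟨A, B, hAB⟩ := (PerfectField.separable_iff_squarefree.2 hsq)
  obtain ⟨a, ha, haA⟩ := IsLocalization.integerNormalization_spec (nonZeroDivisors ℝ[X]) A
  obtain ⟨b, hb, hbB⟩ := IsLocalization.integerNormalization_spec (nonZeroDivisors ℝ[X]) B
  refine ⟨P, C b * IsLocalization.integerNormalization (nonZeroDivisors ℝ[X]) A,
    C a * IsLocalization.integerNormalization (nonZeroDivisors ℝ[X]) B, a * b,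
    mul_ne_zero (nonZeroDivisors.ne_zero ha) (nonZeroDivisors.ne_zero hb), ?_, hPv⟩
  have hsm : ∀ (r : ℝ[X]) (p : K[X]), r • p = C (algebraMap ℝ[X] K r) * p := by
    intro r p
    rw [← Polynomial.smul_eq_C_mul, algebraMap_smul]
  apply hinjm
  simp only [Polynomial.map_add, Polynomial.map_mul, Polynomial.map_C, haA, hbB, hsm, map_mul,
    ← Polynomial.derivative_map]
  linear_combination (C ((algebraMap ℝ[X] K) a) * C ((algebraMap ℝ[X] K) b)) * hAB

lemma eval_eval_eq_evalEval (P : ℝ[X][X]) (q : ℝ[X]) (t : ℝ) :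
    (P.eval q).eval t = P.evalEval t (q.eval t) := by
  rw [← eval₂_evalRingHom, ← coe_evalRingHom t, ← Polynomial.eval₂_at_apply]

/-- A smooth function of one variable that is algebraic over `ℝ(t)` is analytic.

Let `P` be a separable annihilator of `g` with `A P + B P' = c(t)`, where `c` vanishes to order `M`
at `0`, and let `T` be the Taylor polynomial of `g` of order `K = M + 1`. The identity bounds the
vanishing order `N` of `P'(t, T(t))` by `M`, and in the variable `z` with `g = T + t ^ K z` the
equation `P(t, g) = 0` divided by `t ^ (N + K)` is nonsingular in `z` at the origin. -/
theorem analyticAt_of_algebraic (g : ℝ → ℝ) (hg : ContDiffAt ℝ ∞ g 0)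
    (P₀ : ℝ[X][X]) (hP₀ : P₀ ≠ 0)
    (h₀ : ∀ᶠ t in 𝓝[≠] (0 : ℝ), P₀.evalEval t (g t) = 0) : AnalyticAt ℝ g 0 := by
  obtain ⟨P, A, B, c, hc, hAB, hP⟩ := exists_separable_annihilator g P₀ hP₀ h₀
  obtain ⟨c₁, hc₁, hc₁0⟩ := exists_eq_pow_rootMultiplicity_mul_and_not_dvd c hc 0
  set M := rootMultiplicity 0 c
  simp only [map_zero, sub_zero] at hc₁ hc₁0
  have hcM : ¬ X ^ (M + 1) ∣ c := by
    rw [hc₁, pow_succ]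
    intro h
    exact hc₁0 ((mul_dvd_mul_iff_left (pow_ne_zero M X_ne_zero)).1 h)
  set K := M + 1 with hK
  obtain ⟨T, hT⟩ := exists_taylor_poly g hg K
  set s : ℝ → ℝ := fun t => g t - T.eval t with hs
  set α := P.eval T with hα
  set β := (derivative P).eval T with hβ
  set ρ := (taylor T P).divX.divX with hρ
  have hexp : ∀ t y, P.evalEval t (T.eval t + y) =
      α.eval t + y * (β.eval t + y * ρ.evalEval t y) := by
    intro t y
    have h1 : P.evalEval t (T.eval t + y) = (taylor T P).evalEval t y := by
      rw [evalEval, evalEval, taylor_eval]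
      have := eval_eval_eq_evalEval P (C y + T) t
      rw [this, evalEval]; simp [add_comm]
    have h2 := divX_mul_X_add (taylor T P)
    have h3 := divX_mul_X_add (taylor T P).divX
    have h4 : taylor T P = (ρ * X + C β) * X + C α := by
      rw [coeff_divX, zero_add, taylor_coeff_one] at h3
      rw [taylor_coeff_zero] at h2
      rw [h3, h2]
    rw [h1, h4]
    simp only [evalEval_add, evalEval_mul, evalEval_X, evalEval_C]
    ring
  have hs' : s =o[𝓝[≠] (0:ℝ)] (fun t => t ^ K) := hT.mono nhdsWithin_le_nhds
  have htK0 : Tendsto (fun t : ℝ => t ^ K) (𝓝[≠] (0:ℝ)) (𝓝 0) := by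
    have : Tendsto (fun t : ℝ => t ^ K) (𝓝 (0:ℝ)) (𝓝 (0 ^ K)) := (continuous_pow K).tendsto 0
    simpa [hK] using this.mono_left nhdsWithin_le_nhds
  have hs0 : Tendsto s (𝓝[≠] (0:ℝ)) (𝓝 0) := hs'.isBigO.trans_tendsto htK0
  have hpolyO : ∀ q : ℝ[X], (fun t => q.eval t) =O[𝓝[≠] (0:ℝ)] (fun _ => (1:ℝ)) := fun q =>
    ((q.continuous.tendsto 0).mono_left nhdsWithin_le_nhds).isBigO_one ℝ
  have hρO : (fun t => ρ.evalEval t (s t)) =O[𝓝[≠] (0:ℝ)] (fun _ => (1:ℝ)) := by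
    have h1 : Tendsto (fun t => (t, s t)) (𝓝[≠] (0:ℝ)) (𝓝 ((0:ℝ), (0:ℝ))) :=
      (tendsto_id.mono_left nhdsWithin_le_nhds).prodMk_nhds hs0
    exact (((analytic_evalEval ρ _ (Set.mem_univ _)).continuousAt.tendsto).comp h1).isBigO_one ℝ
  have hαs : (fun t => α.eval t) =ᶠ[𝓝[≠] (0:ℝ)]
      fun t => -(s t * β.eval t + s t * (s t * ρ.evalEval t (s t))) := by
    filter_upwards [hP] with t ht
    have := hexp t (s t)
    rw [hs] at this
    simp only [add_sub_cancel, ht] at this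
    simp only [hs]
    linear_combination -this
  -- Since `P(t, g) = 0` and `s = g - T = o(t ^ K)`, the order of `α` exceeds that of `β` by more
  -- than `K`.
  have hαN : ∀ N ≤ K, X ^ N ∣ β → X ^ (K + N + 1) ∣ α := by
    rintro N hN ⟨e, he⟩
    apply X_pow_dvd_of_isLittleO
    refine IsLittleO.congr' ?_ hαs.symm EventuallyEq.rfl
    refine (IsLittleO.add ?_ ?_).neg_left
    · have h1 : (fun t => β.eval t) =O[𝓝[≠] (0:ℝ)] (fun t => t ^ N) := by
        have := (isBigO_refl (fun t : ℝ => t ^ N) (𝓝[≠] (0:ℝ))).mul (hpolyO e)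
        simpa [he] using this
      simpa [pow_add] using hs'.mul_isBigO h1
    · have h1 : (fun t : ℝ => t ^ K) =O[𝓝[≠] (0 : ℝ)] (fun t => t ^ N) :=
        IsBigO.of_bound 1 (by
          filter_upwards [mem_nhdsWithin_of_mem_nhds (Metric.ball_mem_nhds (0:ℝ) one_pos)] with t ht
          have ht1 : |t| ≤ 1 := by simpa using (Metric.mem_ball.1 ht).le
          simpa using pow_le_pow_of_le_one (abs_nonneg t) ht1 hN)
      have h2 := (hs'.isBigO.trans h1).mul hρO
      simpa [pow_add] using hs'.mul_isBigO h2
  have hcT : c = A.eval T * α + B.eval T * β := by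
    have := congrArg (eval T) hAB
    simpa using this.symm
  have hβM : ¬ X ^ (M + 1) ∣ β := by
    intro h
    apply hcM
    rw [hcT]
    refine dvd_add (Dvd.dvd.mul_left ?_ _) (h.mul_left _)
    exact (pow_dvd_pow X (by omega)).trans (hαN K le_rfl h)
  have hβ0 : β ≠ 0 := by intro h; exact hβM (by simp [h])
  obtain ⟨e, he, he0⟩ := exists_eq_pow_rootMultiplicity_mul_and_not_dvd β hβ0 0
  set N := rootMultiplicity 0 β
  simp only [map_zero, sub_zero] at he he0
  have hNM : N ≤ M := by
    by_contra h
    exact hβM ((pow_dvd_pow X (by omega)).trans (Dvd.intro _ he.symm))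
  obtain ⟨a, ha⟩ := hαN N (by omega) (Dvd.intro _ he.symm)
  have he0' : e.eval 0 ≠ 0 := by
    rwa [Ne, ← coeff_zero_eq_eval_zero, ← X_dvd_iff]
  -- `H (t, z)` is `P(t, T + t ^ K z)` divided by `t ^ (N + K)`.
  let H : ℝ × ℝ → ℝ := fun x => x.1 * a.eval x.1 + e.eval x.1 * x.2 +
    x.1 ^ (K - N) * x.2 ^ 2 * ρ.evalEval x.1 (x.1 ^ K * x.2)
  have hpolyA : ∀ (q : ℝ[X]) (x : ℝ × ℝ), AnalyticAt ℝ (fun x : ℝ × ℝ => q.eval x.1) x := fun q x =>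
    (AnalyticOnNhd.eval_polynomial q (𝕜 := ℝ) _ (Set.mem_univ _)).fun_comp analyticAt_fst
  have hHa : AnalyticAt ℝ H (0,0) := by
    refine ((analyticAt_fst.mul (hpolyA _ _)).add ((hpolyA _ _).mul analyticAt_snd)).add
      (((analyticAt_fst.pow _).mul (analyticAt_snd.pow _)).mul ?_)
    exact (analytic_evalEval ρ _ (Set.mem_univ _)).fun_comp
      (f := fun x : ℝ × ℝ => (x.1, x.1 ^ K * x.2))
      (analyticAt_fst.prod ((analyticAt_fst.pow _).mul analyticAt_snd))
  have hKN : K - N ≠ 0 := by omega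
  have hHd : HasDerivAt (fun z => H (0, z)) (e.eval 0) 0 := by
    have : (fun z => H (0, z)) = fun z => e.eval 0 * z := by
      funext z; simp [H, hKN]
    rw [this]
    simpa using (hasDerivAt_id (0:ℝ)).const_mul (e.eval 0)
  have hg0 : s 0 = 0 := by
    have := hT.isBigO.eq_zero_imp.self_of_nhds
    exact this (by simp [hK])
  let z : ℝ → ℝ := fun t => s t / t ^ K
  have hz0 : z 0 = 0 := by simp [z, hg0]
  have hzc : ContinuousAt z 0 := by
    have := hT.tendsto_div_nhds_zero
    simpa [ContinuousAt, hz0] using this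
  have hHz : ∀ᶠ t in 𝓝 (0:ℝ), H (t, z t) = 0 := by
    have h1 : ∀ᶠ t in 𝓝[≠] (0:ℝ), H (t, z t) = 0 := by
      filter_upwards [hP, self_mem_nhdsWithin] with t ht ht0
      have ht0 : t ≠ 0 := ht0
      have h1 := hexp t (s t)
      have h2 : s t = t ^ K * z t := by simp only [z]; field_simp
      have h3 : T.eval t + s t = g t := by simp [hs]
      rw [h3, ht, ha, he, h2] at h1
      have h4 : t ^ (N + K) * H (t, z t) = 0 := by
        have h5 : t ^ K = t ^ N * t ^ (K - N) := by rw [← pow_add]; congr 1; omega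
        rw [h1]
        simp only [H, eval_mul, eval_pow, eval_X]
        have h6 : t ^ (N + K) * t ^ (K - N) = t ^ K * t ^ K := by
          rw [← pow_add, ← pow_add]; congr 1; omega
        linear_combination (z t ^ 2 * evalEval t (t ^ K * z t) ρ) * h6
      exact (mul_eq_zero.1 h4).resolve_left (pow_ne_zero _ ht0)
    rw [eventually_nhdsWithin_iff] at h1
    filter_upwards [h1] with t ht
    by_cases h : t = 0
    · subst h; simp [H, hz0]
    · exact ht h
  have hzA := analyticAt_of_implicit H hHa (by simp [H]) _ he0' hHd z hz0 hzc hHz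
  have : g = fun t => T.eval t + t ^ K * z t := by
    funext t
    by_cases h : t = 0
    · subst h
      have : g 0 - T.eval 0 = 0 := hg0
      simp [hz0]; linarith
    · simp only [z, hs]; field_simp; ring
  rw [this]
  exact (AnalyticOnNhd.eval_polynomial T (𝕜 := ℝ) _ (Set.mem_univ _)).add
    ((analyticAt_id.pow K).mul hzA)

end

/-! ### Isolated zeros in polynomial families -/

section

open Polynomial Filter Topology Asymptotics
open scoped ContDiff

/-- When `deg r i < D`, reducing `X i ^ D` to `- r i` lowers the total degree, so the monomials with all
exponents at most `D` span the quotient. -/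
lemma finite_quotient_of_monic_system {S : Type*} [CommRing S] {n D : ℕ}
    (r : Fin n → MvPolynomial (Fin n) S) (hr : ∀ i, (r i).totalDegree < D) :
    Module.Finite S (MvPolynomial (Fin n) S ⧸
      Ideal.span (Set.range fun i => MvPolynomial.X i ^ D + r i)) := by
  classical
  set J := Ideal.span (Set.range fun i => MvPolynomial.X i ^ D + r i) with hJ
  let mk : MvPolynomial (Fin n) S →ₗ[S] (MvPolynomial (Fin n) S ⧸ J) :=
    (Ideal.Quotient.mkₐ S J).toLinearMap
  let B : Finset (Fin n →₀ ℕ) := Finset.Iic (Finsupp.equivFunOnFinite.symm fun _ => D)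
  let N : Submodule S (MvPolynomial (Fin n) S ⧸ J) :=
    Submodule.span S ((fun m => mk (MvPolynomial.monomial m 1)) '' (B : Set (Fin n →₀ ℕ)))
  have hmon : ∀ k : ℕ, ∀ m : Fin n →₀ ℕ, m.degree = k → mk (MvPolynomial.monomial m 1) ∈ N := by
    intro k
    induction k using Nat.strong_induction_on with
    | _ k ih =>
      intro m hm
      by_cases hB : m ∈ B
      · exact Submodule.subset_span ⟨m, hB, rfl⟩
      obtain ⟨i, hi⟩ : ∃ i, D < m i := by
        by_contra! h
        exact hB (by simpa [B, Finsupp.le_def] using h)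
      set m' := m - Finsupp.single i D with hm'
      have hmm : m = m' + Finsupp.single i D := by
        rw [hm', tsub_add_cancel_of_le]
        simp [Finsupp.single_le_iff, hi.le]
      have h1 : mk (MvPolynomial.monomial m 1) = - mk (MvPolynomial.monomial m' 1 * r i) := by
        rw [← map_neg]
        refine Ideal.Quotient.eq.2 ?_
        have : MvPolynomial.monomial m (1 : S) - -(MvPolynomial.monomial m' 1 * r i) =
            MvPolynomial.monomial m' 1 * (MvPolynomial.X i ^ D + r i) := by
          rw [hmm, MvPolynomial.monomial_add_single]; ring
        rw [this]
        exact J.mul_mem_left _ (Ideal.subset_span ⟨i, rfl⟩)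
      rw [h1]
      refine N.neg_mem ?_
      have h2 := (r i).as_sum
      rw [h2, Finset.mul_sum, map_sum]
      refine N.sum_mem fun v hv => ?_
      rw [MvPolynomial.monomial_mul, one_mul, ← mul_one (MvPolynomial.coeff v (r i)),
        ← smul_eq_mul, ← MvPolynomial.smul_monomial, map_smul]
      refine N.smul_mem _ (ih _ ?_ _ rfl)
      have h3 : v.degree ≤ (r i).totalDegree := by
        rw [Finsupp.degree_eq_sum]
        have := MvPolynomial.le_totalDegree hv
        rwa [Finsupp.sum_fintype _ _ (by simp)] at this
      have h4 := hr i
      rw [← hm, hmm, map_add, map_add, Finsupp.degree_single]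
      omega
  have htop : N = ⊤ := by
    rw [eq_top_iff]
    rintro x -
    obtain ⟨p, rfl⟩ := Ideal.Quotient.mk_surjective x
    change mk p ∈ N
    rw [p.as_sum, map_sum]
    refine N.sum_mem fun v hv => ?_
    rw [← mul_one (MvPolynomial.coeff v p), ← smul_eq_mul, ← MvPolynomial.smul_monomial, map_smul]
    exact N.smul_mem _ (hmon _ _ rfl)
  exact ⟨htop ▸ Submodule.fg_span (B.finite_toSet.image _)⟩

/-- Each coordinate of the solutions of the system `X i ^ D + r i = 0`, `deg r i < D`, satisfies a monic
equation over the coefficient ring; the same equation serves all solutions in `R`. -/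
lemma exists_monic_eliminant {S : Type*} [CommRing S] {n D : ℕ}
    (r : Fin n → MvPolynomial (Fin n) S) (hr : ∀ i, (r i).totalDegree < D) (j : Fin n)
    {R : Type*} [CommRing R] :
    ∃ W : S[X], W.Monic ∧ ∀ θ : MvPolynomial (Fin n) S →+* R,
      (∀ i, θ (MvPolynomial.X i ^ D + r i) = 0) →
        W.eval₂ (θ.comp MvPolynomial.C) (θ (MvPolynomial.X j)) = 0 := by
  have := finite_quotient_of_monic_system r hr
  set J := Ideal.span (Set.range fun i => MvPolynomial.X i ^ D + r i) with hJ
  obtain ⟨W, hWm, hW⟩ := Algebra.IsIntegral.isIntegral (R := S)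
    (Ideal.Quotient.mk J (MvPolynomial.X j))
  refine ⟨W, hWm, fun θ hθ => ?_⟩
  have hJθ : ∀ a ∈ J, θ a = 0 := by
    have : J ≤ RingHom.ker θ := by
      rw [hJ, Ideal.span_le]
      rintro _ ⟨i, rfl⟩
      exact hθ i
    exact fun a ha => this ha
  have h2 := congrArg (Ideal.Quotient.lift J θ hJθ) hW
  rw [map_zero, Polynomial.hom_eval₂, Ideal.Quotient.lift_mk] at h2
  exact h2

lemma hasDerivAt_eval_update {n : ℕ} (q : MvPolynomial (Fin n) ℝ) (x : Fin n → ℝ) (i : Fin n) :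
    HasDerivAt (fun s => MvPolynomial.eval (Function.update x i s) q)
      (MvPolynomial.eval x (MvPolynomial.pderiv i q)) (x i) := by
  induction q using MvPolynomial.induction_on with
  | C a => simpa using hasDerivAt_const (x i) a
  | add p q hp hq => simpa only [map_add] using hp.fun_add hq
  | mul_X p j hp =>
    have hX : HasDerivAt (fun s => Function.update x i s j)
        (MvPolynomial.eval x (MvPolynomial.pderiv i (MvPolynomial.X j))) (x i) := by
      by_cases h : j = i
      · subst h; simpa using hasDerivAt_id' (x j)
      · simpa [h, MvPolynomial.pderiv_X, Pi.single_apply] using hasDerivAt_const (x i) (x j)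
    have := hp.fun_mul hX
    simp only [Function.update_eq_self] at this
    simp only [map_mul, MvPolynomial.eval_X, Derivation.leibniz, map_add, smul_eq_mul]
    convert! this using 1
    ring

/-- An isolated zero `c` of a nonnegative polynomial `q` is a limit, as `δ → ∞`, of critical points of
`∑ x i ^ (D + 1) / (D + 1) + δ q`: on a small sphere around `c` the values of this function eventually
exceed its value at `c`, so it has a local minimum inside. -/
lemma exists_critical_point_near {n D : ℕ} (hD : Odd D) (q : MvPolynomial (Fin n) ℝ)
    (hq : ∀ x, 0 ≤ MvPolynomial.eval x q) (c : Fin n → ℝ) (hc : MvPolynomial.eval c q = 0)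
    (hiso : ∀ᶠ x in 𝓝 c, MvPolynomial.eval x q = 0 → x = c) (η : ℝ) (hη : 0 < η) :
    ∃ δ₀ : ℝ, ∀ δ ≥ δ₀, ∃ x, dist x c < η ∧
      ∀ i, x i ^ D + δ * MvPolynomial.eval x (MvPolynomial.pderiv i q) = 0 := by
  obtain ⟨η', hη', hball⟩ := Metric.nhds_basis_closedBall.eventually_iff.1 hiso
  set ε := min η' (η / 2) with hε
  have hε0 : 0 < ε := lt_min hη' (half_pos hη)
  have hqc : Continuous fun x => MvPolynomial.eval x q := MvPolynomial.continuous_eval q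
  obtain ⟨μ, hμ, hμs⟩ : ∃ μ > 0, ∀ x ∈ Metric.sphere c ε, μ ≤ MvPolynomial.eval x q := by
    rcases (Metric.sphere c ε).eq_empty_or_nonempty with h | h
    · exact ⟨1, one_pos, by simp [h]⟩
    obtain ⟨y, hy, hmin⟩ := (isCompact_sphere c ε).exists_isMinOn h hqc.continuousOn
    refine ⟨_, lt_of_le_of_ne (hq y) ?_, fun x hx => hmin hx⟩
    intro h0
    have hyc := hball (x := y) (Metric.closedBall_subset_closedBall (min_le_left _ _)
      (Metric.sphere_subset_closedBall hy)) h0.symm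
    rw [hyc, Metric.mem_sphere, dist_self] at hy
    exact hε0.ne hy
  have hE : Even (D + 1) := hD.add_one
  set G : (Fin n → ℝ) → ℝ := fun x => ∑ i, x i ^ (D + 1) / (D + 1) with hG
  have hG0 : ∀ x, 0 ≤ G x := fun x => Finset.sum_nonneg fun i _ =>
    div_nonneg (hE.pow_nonneg _) (by positivity)
  have hGc : Continuous G := by fun_prop
  refine ⟨G c / μ + 1, fun δ hδ => ?_⟩
  have hδμ : G c < δ * μ := by
    have : G c / μ < δ := by linarith
    rwa [div_lt_iff₀ hμ] at this
  have hδ0 : 0 < δ := by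
    have : 0 ≤ G c / μ := div_nonneg (hG0 c) hμ.le
    linarith
  set f : (Fin n → ℝ) → ℝ := fun x => G x + δ * MvPolynomial.eval x q with hf
  have hfc : Continuous f := hGc.add (continuous_const.mul hqc)
  obtain ⟨x, hx, hmin⟩ := (isCompact_closedBall c ε).exists_isMinOn
    ⟨c, Metric.mem_closedBall_self hε0.le⟩ hfc.continuousOn
  have hxb : x ∈ Metric.ball c ε := by
    rw [Metric.mem_ball]
    refine lt_of_le_of_ne hx fun h => ?_
    have h1 := hμs x h
    have h2 : f x ≤ f c := hmin (Metric.mem_closedBall_self hε0.le)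
    simp only [hf, hc] at h2
    nlinarith [hG0 x]
  refine ⟨x, lt_of_lt_of_le hxb ((min_le_right _ _).trans (by linarith)), fun i => ?_⟩
  have hloc : IsLocalMin f x :=
    hmin.isLocalMin (Filter.mem_of_superset (Metric.isOpen_ball.mem_nhds hxb)
      Metric.ball_subset_closedBall)
  have hlm : IsLocalMin (fun s => f (Function.update x i s)) (x i) := by
    have hcu : ContinuousAt (fun s => Function.update x i s) (x i) :=
      (continuous_const.update i continuous_id).continuousAt
    have : Tendsto (fun s => Function.update x i s) (𝓝 (x i)) (𝓝 x) := by
      simpa [ContinuousAt] using hcu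
    have h := this.eventually hloc
    simpa [IsLocalMin, IsMinFilter] using h
  have hderG : HasDerivAt (fun s => G (Function.update x i s)) (x i ^ D) (x i) := by
    have h1 : ∀ j ∈ Finset.univ, HasDerivAt (fun s => Function.update x i s j ^ (D + 1) / ((D:ℝ) + 1))
        (if j = i then x i ^ D else 0) (x i) := by
      intro j _
      by_cases h : j = i
      · subst h
        have := ((hasDerivAt_id (x j)).pow (D + 1)).div_const ((D:ℝ) + 1)
        simp only [Function.update_self, if_true]
        convert! this using 1
        have : (D:ℝ) + 1 ≠ 0 := by positivity
        simp; field_simp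
      · simpa [h] using hasDerivAt_const (x i) (x j ^ (D + 1) / ((D:ℝ) + 1))
    have := HasDerivAt.fun_sum h1
    simpa using this
  exact hlm.hasDerivAt_eq_zero (hderG.add ((hasDerivAt_eval_update q x i).const_mul δ))

/-- If `(δ k, y k)` are zeros of `W`, seen as a polynomial in `δ`, with `δ k → ∞` and `y k → y₀`, then
`y₀` is a zero of the leading coefficient of `W`. -/
lemma leadingCoeff_eq_zero_of_tendsto (W : ℝ[X][X][X]) (t y₀ : ℝ) (δ y : ℕ → ℝ)
    (hδ : Tendsto δ atTop atTop) (hy : Tendsto y atTop (𝓝 y₀))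
    (hW : ∀ k, W.eval₂ (evalEvalRingHom t (y k)) (δ k) = 0) :
    W.leadingCoeff.evalEval t y₀ = 0 := by
  set K := W.natDegree
  have hcont : ∀ i, Tendsto (fun k => (W.coeff i).evalEval t (y k)) atTop
      (𝓝 ((W.coeff i).evalEval t y₀)) := by
    intro i
    have h : Continuous fun z : ℝ => (W.coeff i).evalEval t z := by
      have : (fun z : ℝ => (W.coeff i).evalEval t z) =
          fun z => ((W.coeff i).map (evalRingHom t)).eval z := by
        funext z; rw [map_evalRingHom_eval]
      rw [this]
      exact Polynomial.continuous _
    exact (h.tendsto y₀).comp hy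
  have hsum : Tendsto (fun k => ∑ i ∈ Finset.range K,
      (W.coeff i).evalEval t (y k) * (δ k ^ i / δ k ^ K)) atTop (𝓝 0) := by
    rw [show (0:ℝ) = ∑ i ∈ Finset.range K, (W.coeff i).evalEval t y₀ * 0 by simp]
    refine tendsto_finsetSum _ fun i hi => (hcont i).mul ?_
    have hi : i < K := Finset.mem_range.1 hi
    have := (tendsto_pow_neg_atTop (𝕜 := ℝ) (n := K - i) (by omega)).comp hδ
    refine this.congr' ?_
    filter_upwards [hδ.eventually_gt_atTop 0] with k hk
    have h5 : δ k ^ K = δ k ^ i * δ k ^ (K - i) := by rw [← pow_add]; congr 1; omega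
    simp only [Function.comp_apply, zpow_neg, zpow_natCast, h5]
    field_simp
  have h := (hcont K).add hsum
  have h0 : Tendsto (fun k => (W.coeff K).evalEval t (y k) + ∑ i ∈ Finset.range K,
      (W.coeff i).evalEval t (y k) * (δ k ^ i / δ k ^ K)) atTop (𝓝 0) := by
    refine tendsto_const_nhds.congr' ?_
    filter_upwards [hδ.eventually_gt_atTop 0] with k hk
    have h1 := hW k
    rw [eval₂_eq_sum_range, Finset.sum_range_succ] at h1
    have h2 : (δ k ^ K) ≠ 0 := (pow_pos hk _).ne'
    have h3 : (W.coeff K).evalEval t (y k) + ∑ i ∈ Finset.range K,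
      (W.coeff i).evalEval t (y k) * (δ k ^ i / δ k ^ K) =
      (∑ i ∈ Finset.range K, (W.coeff i).evalEval t (y k) * δ k ^ i
        + (W.coeff K).evalEval t (y k) * δ k ^ K) / δ k ^ K := by
      rw [add_div, mul_div_cancel_right₀ _ h2, Finset.sum_div, add_comm]
      simp only [mul_div_assoc]
    rw [h3]
    simp only [coe_evalEvalRingHom] at h1
    rw [h1, zero_div]
  have := tendsto_nhds_unique h h0
  rw [add_zero] at this
  exact this

/-- The isolated zeros of the members `Q_t` of a polynomial family, for those `t` with `Q_t ≥ 0`, are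
algebraic functions of `t`: one nonzero polynomial `P` annihilates the `j`-th coordinate of all of
them. The critical points approximating such a zero solve a system that is monic over `ℝ[t, δ]`;
`P` is the leading coefficient in `δ` of a monic equation for their `j`-th coordinate. -/
theorem exists_annihilator_of_isolated_zero {n : ℕ} (Q : MvPolynomial (Fin n) ℝ[X]) (j : Fin n) :
    ∃ P : ℝ[X][X], P ≠ 0 ∧ ∀ (t : ℝ) (c : Fin n → ℝ),
      (∀ x, 0 ≤ MvPolynomial.eval x (Q.map (evalRingHom t))) →
      MvPolynomial.eval c (Q.map (evalRingHom t)) = 0 →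
      (∀ᶠ x in 𝓝 c, MvPolynomial.eval x (Q.map (evalRingHom t)) = 0 → x = c) →
      P.evalEval t (c j) = 0 := by
  let r : Fin n → MvPolynomial (Fin n) ℝ[X][X] := fun i =>
    MvPolynomial.C X * (MvPolynomial.pderiv i Q).map C
  -- `D` is odd, so that `∑ x i ^ (D + 1)` is nonnegative.
  set D := 2 * (∑ i, (r i).totalDegree) + 1 with hD
  have hr : ∀ i, (r i).totalDegree < D := by
    intro i
    have := Finset.single_le_sum (f := fun i => (r i).totalDegree) (fun _ _ => Nat.zero_le _)
      (Finset.mem_univ i)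
    omega
  obtain ⟨W, hWm, hW⟩ := exists_monic_eliminant (R := ℝ) r hr j
  refine ⟨(Bivariate.swap W).leadingCoeff, ?_, ?_⟩
  · rw [Ne, leadingCoeff_eq_zero, EmbeddingLike.map_eq_zero_iff]
    exact hWm.ne_zero
  intro t c hpos hc hiso
  have hcrit : ∀ k : ℕ, ∃ (δ : ℝ) (x : Fin n → ℝ), (k : ℝ) ≤ δ ∧ dist x c < 1 / ((k:ℝ) + 1) ∧
      ∀ i, x i ^ D + δ * MvPolynomial.eval x
        (MvPolynomial.pderiv i (Q.map (evalRingHom t))) = 0 := by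
    intro k
    obtain ⟨δ₀, h⟩ := exists_critical_point_near (D := D) ⟨_, rfl⟩ _ hpos c hc hiso
      (1 / ((k:ℝ) + 1)) (by positivity)
    obtain ⟨x, hx⟩ := h (max δ₀ k) (le_max_left _ _)
    exact ⟨_, x, le_max_right _ _, hx⟩
  choose δ x hδ hx hcr using hcrit
  have hxc : Tendsto x atTop (𝓝 c) := by
    rw [tendsto_iff_dist_tendsto_zero]
    exact squeeze_zero (fun _ => dist_nonneg) (fun k => (hx k).le)
      tendsto_one_div_add_atTop_nhds_zero_nat
  refine leadingCoeff_eq_zero_of_tendsto _ t (c j) δ (fun k => x k j)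
    (tendsto_atTop_mono hδ tendsto_natCast_atTop_atTop) ((continuous_apply j).tendsto c |>.comp hxc) ?_
  intro k
  have hswap : (eval₂RingHom (evalEvalRingHom t (x k j)) (δ k)).comp
      (Bivariate.swap (R := ℝ[X])).toRingEquiv.toRingHom =
      eval₂RingHom (evalEvalRingHom t (δ k)) (x k j) := by
    ext <;> simp [Bivariate.swap_C, Bivariate.swap_X, Bivariate.swap_C_C, Bivariate.swap_Y]
  have h1 : (Bivariate.swap W).eval₂ (evalEvalRingHom t (x k j)) (δ k) =
      W.eval₂ (evalEvalRingHom t (δ k)) (x k j) := RingHom.congr_fun hswap W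
  rw [h1]
  have h2 := hW (MvPolynomial.eval₂Hom (evalEvalRingHom t (δ k)) (x k)) (fun i => by
    have := hcr k i
    rw [MvPolynomial.pderiv_map] at this
    simp only [r, map_add, map_pow, map_mul,
      MvPolynomial.coe_eval₂Hom, MvPolynomial.eval₂_X, MvPolynomial.eval₂_C, coe_evalEvalRingHom,
      evalEval_X, MvPolynomial.eval₂_map]
    rw [← this, MvPolynomial.eval_map]
    congr 3
    ext <;> simp)
  convert! h2 using 2
  · ext <;> simp
  · simp

end

/-! ### Analyticity from analyticity on lines -/

section

open Filter Topology
open scoped ContDiff Nat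

lemma iteratedDeriv_line {E : Type*} [NormedAddCommGroup E] [NormedSpace ℝ E] (f : E → ℝ) (q v : E)
    (hf : ContDiffAt ℝ ∞ f q) (k : ℕ) :
    ∀ᶠ t in 𝓝 (0:ℝ), iteratedDeriv k (fun t : ℝ => f (q + t • v)) t =
      iteratedFDeriv ℝ k f (q + t • v) (fun _ => v) := by
  induction k with
  | zero => simp
  | succ k ih =>
    have hcont : Tendsto (fun t : ℝ => q + t • v) (𝓝 0) (𝓝 q) := by
      have : Continuous (fun t : ℝ => q + t • v) := by fun_prop
      simpa using this.tendsto 0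
    have h2 : ∀ᶠ x in 𝓝 q, ContDiffAt ℝ ((k : ℕ∞ω) + 1) f x :=
      (hf.of_le (by exact_mod_cast le_top)).eventually (by simp)
    filter_upwards [ih.eventually_nhds, hcont.eventually h2] with t ht ht2
    rw [iteratedDeriv_succ, EventuallyEq.deriv_eq ht, ht2.deriv_fderiv_add_smul]

/-- Polarization around an arbitrary centre `v₀`. Expanding the left side by multilinearity, the terms in
which some `v i` does not occur cancel in pairs, and the others are the permutations of `v`. -/
lemma polarization {E : Type*} [NormedAddCommGroup E] [NormedSpace ℝ E] {k : ℕ}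
    (P : ContinuousMultilinearMap ℝ (fun _ : Fin k => E) ℝ) (v₀ : E) (v : Fin k → E) :
    ∑ S : Finset (Fin k), (-1 : ℝ) ^ S.card * P (fun _ => v₀ + ∑ i ∈ S, v i) =
      (-1) ^ k * ∑ σ : Equiv.Perm (Fin k), P (fun i => v (σ i)) := by
  classical
  let c : Finset (Fin k) → Option (Fin k) → ℝ := fun S o => o.elim 1 fun i => if i ∈ S then 1 else 0
  let u : Option (Fin k) → E := fun o => o.elim v₀ v
  have h1 : ∀ S : Finset (Fin k), P (fun _ => v₀ + ∑ i ∈ S, v i) =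
      ∑ r : Fin k → Option (Fin k), (∏ j, c S (r j)) * P (fun j => u (r j)) := by
    intro S
    have : (fun _ : Fin k => v₀ + ∑ i ∈ S, v i) =
        fun _ => ∑ o : Option (Fin k), c S o • u o := by
      funext _
      simp [Fintype.sum_option, c, u, Finset.sum_ite_mem]
    rw [this, ContinuousMultilinearMap.map_sum]
    refine Finset.sum_congr rfl fun r _ => ?_
    rw [P.map_smul_univ (fun j => c S (r j)) (fun j => u (r j)), smul_eq_mul]
  simp only [h1, Finset.mul_sum]
  rw [Finset.sum_comm]
  have h2 : ∀ r : Fin k → Option (Fin k), ¬ (∀ i, ∃ j, r j = some i) →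
      ∑ S : Finset (Fin k), (-1 : ℝ) ^ S.card * ((∏ j, c S (r j)) * P (fun j => u (r j))) = 0 := by
    intro r hr
    push Not at hr
    obtain ⟨i, hi⟩ := hr
    have hc : ∀ S S' : Finset (Fin k), (∀ l, l ≠ i → (l ∈ S ↔ l ∈ S')) →
        ∏ j, c S (r j) = ∏ j, c S' (r j) := by
      intro S S' h
      refine Finset.prod_congr rfl fun j _ => ?_
      cases hrj : r j with
      | none => rfl
      | some l =>
        have : l ≠ i := by rintro rfl; exact hi j hrj
        simp [c, h l this]
    rw [← Finset.sum_add_sum_compl (Finset.univ.filter fun S : Finset (Fin k) => i ∈ S)]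
    rw [add_eq_zero_iff_eq_neg, ← Finset.sum_neg_distrib]
    refine Finset.sum_bij' (fun S _ => S.erase i) (fun S _ => insert i S) ?_ ?_ ?_ ?_ ?_
    · intro S hS; simp
    · intro S hS; simp
    · intro S hS; exact Finset.insert_erase (by simpa using hS)
    · intro S hS; exact Finset.erase_insert (by simpa using hS)
    · intro S hS
      have hiS : i ∈ S := by simpa using hS
      rw [hc (S.erase i) S (fun l hl => by simp [hl]), ← Finset.card_erase_add_one hiS, pow_succ]
      ring
  have h3 : ∀ r : Fin k → Option (Fin k), (∀ i, ∃ j, r j = some i) →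
      ∑ S : Finset (Fin k), (-1 : ℝ) ^ S.card * ((∏ j, c S (r j)) * P (fun j => u (r j))) =
        (-1) ^ k * P (fun j => u (r j)) := by
    intro r hr
    rw [Finset.sum_eq_single Finset.univ]
    · have : ∏ j, c Finset.univ (r j) = 1 := Finset.prod_eq_one fun j _ => by
        cases r j <;> simp [c]
      simp [this]
    · intro S _ hS
      obtain ⟨i, hi⟩ : ∃ i, i ∉ S := by
        by_contra! h; exact hS (Finset.eq_univ_iff_forall.2 h)
      obtain ⟨j, hj⟩ := hr i
      rw [Finset.prod_eq_zero (Finset.mem_univ j) (by simp [hj, c, hi])]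
      simp
    · simp
  rw [← Finset.sum_filter_add_sum_filter_not _ (fun r : Fin k → Option (Fin k) => ∀ i, ∃ j, r j = some i)]
  rw [Finset.sum_eq_zero (s := Finset.univ.filter fun r : Fin k → Option (Fin k) => ¬ _)
    fun r hr => h2 r (by simpa using hr), add_zero]
  rw [Finset.sum_congr rfl fun r hr => h3 r (by simpa using hr)]
  symm
  refine Finset.sum_bij (fun σ _ => fun j => some (σ j)) ?_ ?_ ?_ ?_
  · intro σ _
    simp only [Finset.mem_filter, Finset.mem_univ, true_and]
    exact fun i => ⟨σ.symm i, by simp⟩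
  · intro σ _ τ _ h
    ext j
    have := congrFun h j
    simp only [Option.some.injEq] at this
    rw [this]
  · intro r hr
    simp only [Finset.mem_filter, Finset.mem_univ, true_and] at hr
    choose s hs using hr
    have hinj : Function.Injective s := fun a b hab => by
      have := hs a
      rw [hab, hs b] at this
      exact (Option.some.inj this).symm
    let τ := Equiv.ofBijective s (Finite.injective_iff_bijective.1 hinj)
    refine ⟨τ.symm, Finset.mem_univ _, ?_⟩
    funext j
    rw [← hs]
    congr 1
    exact τ.apply_symm_apply j
  · intro σ _
    rfl

/-- The average of a multilinear form over all permutations of its arguments. -/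
noncomputable def symmetrize {E : Type*} [NormedAddCommGroup E] [NormedSpace ℝ E] {k : ℕ}
    (P : ContinuousMultilinearMap ℝ (fun _ : Fin k => E) ℝ) :
    ContinuousMultilinearMap ℝ (fun _ : Fin k => E) ℝ :=
  (k ! : ℝ)⁻¹ • ∑ σ : Equiv.Perm (Fin k), P.domDomCongr σ

lemma symmetrize_apply {E : Type*} [NormedAddCommGroup E] [NormedSpace ℝ E] {k : ℕ}
    (P : ContinuousMultilinearMap ℝ (fun _ : Fin k => E) ℝ) (v : Fin k → E) :
    symmetrize P v = (k ! : ℝ)⁻¹ * ∑ σ : Equiv.Perm (Fin k), P (fun i => v (σ i)) := by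
  simp [symmetrize]

lemma symmetrize_diag {E : Type*} [NormedAddCommGroup E] [NormedSpace ℝ E] {k : ℕ}
    (P : ContinuousMultilinearMap ℝ (fun _ : Fin k => E) ℝ) (v : E) :
    symmetrize P (fun _ => v) = P (fun _ => v) := by
  have : (k ! : ℝ) ≠ 0 := by positivity
  rw [symmetrize_apply]
  simp [Fintype.card_perm]
  field_simp

/-- A bound for `P (w, …, w)` on a ball of radius `ρ`, wherever it is centred, bounds the symmetrization
of `P`, by polarization with vectors of length `ρ / (2 k)` and `k ^ k / k! ≤ e ^ k`. -/
lemma norm_symmetrize_le {E : Type*} [NormedAddCommGroup E] [NormedSpace ℝ E] {k : ℕ}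
    (P : ContinuousMultilinearMap ℝ (fun _ : Fin k => E) ℝ) (v₀ : E) (ρ M : ℝ) (hρ : 0 < ρ)
    (hM : 0 ≤ M) (h : ∀ w ∈ Metric.ball v₀ ρ, |P (fun _ => w)| ≤ M) :
    ‖symmetrize P‖ ≤ M * (4 * Real.exp 1 / ρ) ^ k := by
  have hsmall : ∀ u : Fin k → E, (∀ i, ‖u i‖ ≤ ρ / (2 * k)) →
      |symmetrize P u| ≤ (k ! : ℝ)⁻¹ * (2 ^ k * M) := by
    intro u hu
    have h1 := congrArg abs (polarization P v₀ u)
    rw [abs_mul, abs_pow, abs_neg, abs_one, one_pow, one_mul] at h1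
    rw [symmetrize_apply, abs_mul, ← h1, abs_of_nonneg (by positivity)]
    gcongr
    refine (Finset.abs_sum_le_sum_abs _ _).trans ?_
    have : ∀ S ∈ (Finset.univ : Finset (Finset (Fin k))),
        |(-1 : ℝ) ^ S.card * P (fun _ => v₀ + ∑ i ∈ S, u i)| ≤ M := by
      intro S _
      rw [abs_mul, abs_pow, abs_neg, abs_one, one_pow, one_mul]
      apply h
      rw [Metric.mem_ball, dist_self_add_left]
      rcases Nat.eq_zero_or_pos k with rfl | hk
      · simpa [Finset.eq_empty_of_isEmpty S] using hρ
      calc ‖∑ i ∈ S, u i‖ ≤ S.card • (ρ / (2 * k)) := norm_sum_le_of_le _ (fun i _ => hu i) |>.trans (by simp)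
        _ ≤ k • (ρ / (2 * k)) := by
          gcongr
          simpa using Finset.card_le_univ S
        _ = ρ / 2 := by
          have : (k : ℝ) ≠ 0 := by positivity
          simp; field_simp
        _ < ρ := by linarith
    refine (Finset.sum_le_sum this).trans ?_
    simp
  have hexp : (k : ℝ) ^ k / k ! ≤ Real.exp 1 ^ k := by
    have := Real.pow_div_factorial_le_exp (k : ℝ) (by positivity) k
    rwa [← Real.exp_one_pow] at this
  refine ContinuousMultilinearMap.opNorm_le_bound (by positivity) fun v => ?_
  by_cases hv : ∃ i, v i = 0
  · obtain ⟨i, hi⟩ := hv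
    rw [(symmetrize P).map_coord_zero i hi]
    simp; positivity
  push Not at hv
  have hk : ∀ i : Fin k, (0:ℝ) < k := fun i => by exact_mod_cast i.pos
  have hvn : ∀ i, 0 < ‖v i‖ := fun i => norm_pos_iff.2 (hv i)
  set u : Fin k → E := fun i => (ρ / (2 * k) / ‖v i‖) • v i with hu
  have hvu : v = fun i => ((2 * k / ρ) * ‖v i‖) • u i := by
    funext i
    have := hk i
    have := hvn i
    simp only [hu, smul_smul]
    rw [show (2 * k / ρ) * ‖v i‖ * (ρ / (2 * k) / ‖v i‖) = 1 by field_simp, one_smul]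
  have h2 := hsmall u (fun i => by
    have := hk i
    have := hvn i
    rw [hu, norm_smul, Real.norm_of_nonneg (by positivity)]
    exact le_of_eq (by field_simp))
  have h3 : ‖symmetrize P v‖ = (2 * k / ρ) ^ k * (∏ i, ‖v i‖) * |symmetrize P u| := by
    conv_lhs => rw [hvu]
    rw [(symmetrize P).map_smul_univ, smul_eq_mul, norm_mul, Finset.prod_mul_distrib]
    simp only [Finset.prod_const, Finset.card_univ, Fintype.card_fin]
    rw [Real.norm_of_nonneg (by positivity), Real.norm_eq_abs]
  rw [h3]
  calc (2 * k / ρ) ^ k * (∏ i, ‖v i‖) * |symmetrize P u|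
      ≤ (2 * k / ρ) ^ k * (∏ i, ‖v i‖) * ((k ! : ℝ)⁻¹ * (2 ^ k * M)) := by gcongr
    _ = M * ((4 / ρ) ^ k * ((k:ℝ) ^ k / k !)) * ∏ i, ‖v i‖ := by
      rw [show (4 / ρ : ℝ) = 2 * 2 / ρ by norm_num]
      simp only [div_pow, mul_pow]
      field_simp
    _ ≤ M * ((4 / ρ) ^ k * Real.exp 1 ^ k) * ∏ i, ‖v i‖ := by gcongr
    _ = M * (4 * Real.exp 1 / ρ) ^ k * ∏ i, ‖v i‖ := by
      rw [← mul_pow]; ring_nf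

/-- A smooth function whose restriction to every line is analytic is analytic. The Taylor coefficients
along lines through `q` are `P k (v, …, v)`; by Baire's theorem they grow at most geometrically,
uniformly for `v` in some ball, so the symmetrized Taylor series converges near `q`. Its sum agrees
with `f` on every segment from `q` by the identity theorem in one variable. -/
theorem analyticAt_of_analyticAt_lines {E : Type*} [NormedAddCommGroup E] [NormedSpace ℝ E]
    [CompleteSpace E] (f : E → ℝ) (q : E) (r : ℝ) (hr : 0 < r) (hf : ContDiffAt ℝ ∞ f q)
    (hl : ∀ a ∈ Metric.ball q r, ∀ v : E, AnalyticAt ℝ (fun t : ℝ => f (a + t • v)) 0) :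
    AnalyticAt ℝ f q := by
  let P : ∀ k : ℕ, ContinuousMultilinearMap ℝ (fun _ : Fin k => E) ℝ := fun k =>
    (k ! : ℝ)⁻¹ • iteratedFDeriv ℝ k f q
  have hPv : ∀ v : E, HasFPowerSeriesAt (fun t : ℝ => f (q + t • v))
      (FormalMultilinearSeries.ofScalars ℝ fun k => P k fun _ => v) 0 := by
    intro v
    have h := (hl q (Metric.mem_ball_self hr) v).hasFPowerSeriesAt
    have hk : (fun k => P k fun _ => v) =
        fun k => iteratedDeriv k (fun t : ℝ => f (q + t • v)) 0 / (k ! : ℝ) := by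
      funext k
      rw [(iteratedDeriv_line f q v hf k).self_of_nhds]
      simp [P, div_eq_inv_mul]
    rw [hk]
    exact h
  -- Baire category: one geometric bound holds for all directions in some ball.
  obtain ⟨M, v₀, ρ, hM, hρ, hbd⟩ : ∃ (M : ℝ) (v₀ : E) (ρ : ℝ), 0 < M ∧ 0 < ρ ∧
      ∀ k, ∀ w ∈ Metric.ball v₀ ρ, |P k (fun _ => w)| ≤ M * M ^ k := by
    let F : ℕ → Set E := fun m => ⋂ k : ℕ,
      {v : E | |P k (fun _ => v)| ≤ ((m:ℝ) + 1) * ((m:ℝ) + 1) ^ k}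
    have hFc : ∀ m, IsClosed (F m) := fun m => isClosed_iInter fun k =>
      isClosed_le (by
        have : Continuous fun v : E => P k (fun _ => v) :=
          (P k).cont.comp (continuous_pi fun _ => continuous_id)
        exact this.abs) continuous_const
    have hFu : ⋃ m, F m = Set.univ := by
      refine Set.eq_univ_of_forall fun v => ?_
      obtain ⟨C, s, hC, hs, hCs⟩ := FormalMultilinearSeries.le_mul_pow_of_radius_pos _
        (hPv v).radius_pos
      obtain ⟨m, hm⟩ := exists_nat_ge (max C s)
      refine Set.mem_iUnion.2 ⟨m, Set.mem_iInter.2 fun k => ?_⟩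
      have h1 := hCs k
      rw [FormalMultilinearSeries.ofScalars_norm, Real.norm_eq_abs] at h1
      refine h1.trans ?_
      have h2 : C ≤ (m:ℝ) + 1 := by linarith [le_max_left C s]
      have h3 : s ≤ (m:ℝ) + 1 := by linarith [le_max_right C s]
      gcongr
    obtain ⟨m, v₀, hv₀⟩ := nonempty_interior_of_iUnion_of_closed hFc hFu
    obtain ⟨ρ, hρ, hsub⟩ := Metric.mem_nhds_iff.1 (mem_interior_iff_mem_nhds.1 hv₀)
    exact ⟨m + 1, v₀, ρ, by positivity, hρ, fun k w hw => Set.mem_iInter.1 (hsub hw) k⟩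
  let Q : FormalMultilinearSeries ℝ E ℝ := fun k => symmetrize (P k)
  have hQrad : 0 < Q.radius := by
    set A := M * (4 * Real.exp 1 / ρ) with hA
    have hA0 : 0 < A := by positivity
    have hb : ∀ k, ‖Q k‖ * ((A⁻¹.toNNReal : NNReal) : ℝ) ^ k ≤ M := by
      intro k
      have h1 := norm_symmetrize_le (P k) v₀ ρ (M * M ^ k) hρ (by positivity) (hbd k)
      have h2 : M * M ^ k * (4 * Real.exp 1 / ρ) ^ k = M * A ^ k := by
        rw [hA, mul_pow]; ring
      rw [h2] at h1
      rw [Real.coe_toNNReal _ (by positivity)]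
      calc ‖Q k‖ * (A⁻¹) ^ k ≤ M * A ^ k * (A⁻¹) ^ k := by gcongr
        _ = M := by rw [mul_assoc, ← mul_pow, mul_inv_cancel₀ hA0.ne', one_pow, mul_one]
    refine lt_of_lt_of_le ?_ (Q.le_radius_of_bound M hb)
    simpa using hA0
  have hG := Q.hasFPowerSeriesOnBall hQrad
  obtain ⟨R, hR, hRsub⟩ : ∃ R > 0, Metric.ball (0:E) R ⊆ Metric.eball 0 Q.radius :=
    Metric.mem_nhds_iff.1 (Metric.eball_mem_nhds _ hQrad)
  have key : ∀ v ∈ Metric.ball (0:E) (min r R), f (q + v) = Q.sum v := by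
    intro v hv
    rw [mem_ball_zero_iff, lt_min_iff] at hv
    have hseg : ∀ t ∈ Set.Icc (0:ℝ) 1, ‖t • v‖ ≤ ‖v‖ := by
      intro t ht
      rw [norm_smul, Real.norm_of_nonneg ht.1]
      exact mul_le_of_le_one_left (norm_nonneg _) ht.2
    have h1 : AnalyticOnNhd ℝ (fun t : ℝ => f (q + t • v)) (Set.Icc 0 1) := by
      intro t ht
      have h := hl (q + t • v) (by simpa using (hseg t ht).trans_lt hv.1) v
      have h' : AnalyticAt ℝ (fun s : ℝ => s - t) t := analyticAt_id.sub analyticAt_const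
      have h2 := AnalyticAt.fun_comp (f := fun s : ℝ => s - t) (x := t) (by simpa using h) h'
      convert! h2 using 2 with s
      rw [add_assoc, ← add_smul]; congr 3; ring
    have h2 : AnalyticOnNhd ℝ (fun t : ℝ => Q.sum (t • v)) (Set.Icc 0 1) := by
      intro t ht
      have hmem : t • v ∈ Metric.eball (0:E) Q.radius :=
        hRsub (by simpa using (hseg t ht).trans_lt hv.2)
      exact (hG.analyticAt_of_mem hmem).fun_comp (f := fun t : ℝ => t • v)
        (analyticAt_id.smul analyticAt_const)
    have h3 : (fun t : ℝ => f (q + t • v)) =ᶠ[𝓝 0] fun t : ℝ => Q.sum (t • v) := by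
      have hcont : Tendsto (fun t : ℝ => t • v) (𝓝 0) (𝓝 0) := by
        have : Continuous fun t : ℝ => t • v := by fun_prop
        simpa using this.tendsto 0
      filter_upwards [(hPv v).eventually_hasSum, hcont.eventually hG.hasFPowerSeriesAt.eventually_hasSum]
        with t ht1 ht2
      rw [zero_add] at ht1 ht2
      refine ht1.unique ?_
      convert! ht2 using 2 with k
      change _ = symmetrize (P k) (fun _ => t • v)
      rw [symmetrize_diag, (P k).map_smul_univ (fun _ => t) (fun _ => v)]
      simp
    have := h1.eqOn_of_preconnected_of_eventuallyEq h2 isPreconnected_Icc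
      (Set.left_mem_Icc.2 zero_le_one) h3 (Set.right_mem_Icc.2 zero_le_one)
    simpa using this
  have hGa : AnalyticAt ℝ (fun x => Q.sum (x - q)) q := by
    have h' : AnalyticAt ℝ (fun x : E => x - q) q := analyticAt_id.sub analyticAt_const
    exact AnalyticAt.fun_comp (f := fun x : E => x - q) (x := q)
      (by simpa using hG.hasFPowerSeriesAt.analyticAt) h'
  refine hGa.congr ?_
  filter_upwards [Metric.ball_mem_nhds q (lt_min hr hR)] with x hx
  rw [← key (x - q) (by simpa [dist_eq_norm] using hx)]
  congr 1; abel

end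

/-! ### Straightening a real algebraic set near a manifold point -/

section

open Polynomial Filter Topology
open scoped ContDiff

/-- The projection of `ℝⁿ` that keeps the first `d` coordinates and sets the others to `0`. -/
noncomputable def trunc (n d : ℕ) : (Fin n → ℝ) →L[ℝ] (Fin n → ℝ) :=
  ContinuousLinearMap.pi fun i =>
    if (i : ℕ) < d then ContinuousLinearMap.proj (R := ℝ) (φ := fun _ : Fin n => ℝ) i else 0

lemma trunc_apply {n d : ℕ} (x : Fin n → ℝ) (i : Fin n) :
    trunc n d x i = if (i : ℕ) < d then x i else 0 := by
  by_cases h : (i : ℕ) < d <;> simp [trunc, h]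

lemma trunc_trunc {n d : ℕ} (x : Fin n → ℝ) : trunc n d (trunc n d x) = trunc n d x := by
  ext i; simp only [trunc_apply]; split_ifs <;> rfl

/-- For every `t`, the set `V(I) ∩ {x | (L x)_i = (a + t v)_i for i < d}` is the zero set of a nonnegative
polynomial depending polynomially on `t`: the sum of the squares of generators of `I` and of the
linear equations. -/
lemma exists_polynomial_family {n : ℕ} (I : Ideal (MvPolynomial (Fin n) ℝ)) (d : ℕ)
    (L : (Fin n → ℝ) →L[ℝ] (Fin n → ℝ)) (a v : Fin n → ℝ) :
    ∃ Q : MvPolynomial (Fin n) ℝ[X], ∀ (t : ℝ) (x : Fin n → ℝ),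
      0 ≤ MvPolynomial.eval x (Q.map (evalRingHom t)) ∧
      (MvPolynomial.eval x (Q.map (evalRingHom t)) = 0 ↔
        x ∈ realZeroSet I ∧ trunc n d (L x) = trunc n d (a + t • v)) := by
  classical
  obtain ⟨G, hG⟩ : I.FG := IsNoetherian.noetherian I
  let l : Fin n → MvPolynomial (Fin n) ℝ[X] := fun i =>
    (∑ k, MvPolynomial.C (C (L (Pi.single k 1) i)) * MvPolynomial.X k)
      - MvPolynomial.C (C (a i) + C (v i) * X)
  have hl : ∀ i t x, MvPolynomial.eval x ((l i).map (evalRingHom t)) =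
      L x i - (a + t • v) i := by
    intro i t x
    have : L x i = ∑ k, L (Pi.single k 1) i * x k := by
      have h := congrFun (LinearMap.pi_apply_eq_sum_univ (L : (Fin n → ℝ) →ₗ[ℝ] (Fin n → ℝ)) x) i
      simp only [ContinuousLinearMap.coe_coe, Finset.sum_apply, Pi.smul_apply, smul_eq_mul] at h
      rw [h]
      refine Finset.sum_congr rfl fun k _ => ?_
      rw [mul_comm]
      have : (fun m => if k = m then (1 : ℝ) else 0) = Pi.single k 1 := by
        ext m; simp [Pi.single_apply, eq_comm]
      rw [this]
    rw [this]
    simp only [l, map_sub, map_sum, map_mul, map_add, MvPolynomial.map_C, MvPolynomial.map_X,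
      MvPolynomial.eval_C, MvPolynomial.eval_X, coe_evalRingHom, eval_C, eval_X, Pi.add_apply,
      Pi.smul_apply, smul_eq_mul]
    ring
  refine ⟨∑ g ∈ G, (g.map C) ^ 2 + ∑ i ∈ Finset.univ.filter (fun i : Fin n => (i : ℕ) < d), l i ^ 2, fun t x => ?_⟩
  have hev : MvPolynomial.eval x ((∑ g ∈ G, (g.map C) ^ 2 +
      ∑ i ∈ Finset.univ.filter (fun i : Fin n => (i : ℕ) < d), l i ^ 2).map (evalRingHom t)) =
      ∑ g ∈ G, (MvPolynomial.eval x g) ^ 2 +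
        ∑ i ∈ Finset.univ.filter (fun i : Fin n => (i : ℕ) < d), (L x i - (a + t • v) i) ^ 2 := by
    simp only [map_add, map_sum, map_pow, hl, MvPolynomial.map_map]
    congr 1
    refine Finset.sum_congr rfl fun g _ => ?_
    have : (evalRingHom t).comp (C : ℝ →+* ℝ[X]) = RingHom.id ℝ := by ext; simp
    rw [this, MvPolynomial.map_id]
  have h1 : 0 ≤ ∑ g ∈ G, (MvPolynomial.eval x g) ^ 2 := Finset.sum_nonneg fun _ _ => sq_nonneg _
  have h2 : 0 ≤ ∑ i ∈ Finset.univ.filter (fun i : Fin n => (i : ℕ) < d), (L x i - (a + t • v) i) ^ 2 :=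
    Finset.sum_nonneg fun _ _ => sq_nonneg _
  rw [hev]
  refine ⟨add_nonneg h1 h2, ?_⟩
  rw [add_eq_zero_iff_of_nonneg h1 h2, Finset.sum_eq_zero_iff_of_nonneg (fun _ _ => sq_nonneg _),
    Finset.sum_eq_zero_iff_of_nonneg (fun _ _ => sq_nonneg _)]
  refine and_congr ?_ ?_
  · simp only [sq_eq_zero_iff]
    constructor
    · intro h f hf
      rw [← hG] at hf
      have : Ideal.span (G : Set (MvPolynomial (Fin n) ℝ)) ≤ RingHom.ker (MvPolynomial.eval x) :=
        Ideal.span_le.2 fun g hg => h g hg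
      simpa [MvPolynomial.aeval_eq_eval] using this hf
    · intro h g hg
      have := h g (hG ▸ Ideal.subset_span hg)
      simpa [MvPolynomial.aeval_eq_eval] using this
  · simp only [Finset.mem_filter, Finset.mem_univ, true_and, sq_eq_zero_iff, sub_eq_zero]
    rw [funext_iff]
    refine forall_congr' fun i => ?_
    simp only [trunc_apply]
    by_cases h : (i : ℕ) < d <;> simp [h]

/-- A smooth `Γ` such that `Γ y` is an isolated point of `V(I) ∩ {x | (L x)_i = y_i for i < d}` is
analytic: along each line in `y` its coordinates are algebraic, hence analytic. -/
lemma analyticAt_parametrization {n : ℕ} (I : Ideal (MvPolynomial (Fin n) ℝ)) (d : ℕ)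
    (L : (Fin n → ℝ) →L[ℝ] (Fin n → ℝ)) (Γ : (Fin n → ℝ) → (Fin n → ℝ))
    (O : Set (Fin n → ℝ)) (hO : IsOpen O)
    (hΓ : ∀ y ∈ O, ContDiffAt ℝ ∞ Γ y) (hX : ∀ y ∈ O, Γ y ∈ realZeroSet I)
    (hL : ∀ y ∈ O, trunc n d (L (Γ y)) = trunc n d y)
    (huniq : ∀ y ∈ O, ∀ᶠ x in 𝓝 (Γ y), x ∈ realZeroSet I → trunc n d (L x) = trunc n d y → x = Γ y)
    (q : Fin n → ℝ) (hq : q ∈ O) : AnalyticAt ℝ Γ q := by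
  obtain ⟨r, hr, hrO⟩ := Metric.isOpen_iff.1 hO q hq
  rw [analyticAt_pi_iff]
  intro j
  refine analyticAt_of_analyticAt_lines (fun y => Γ y j) q r hr (contDiffAt_pi.1 (hΓ q hq) j) ?_
  intro a ha v
  obtain ⟨Q, hQ⟩ := exists_polynomial_family I d L a v
  obtain ⟨P, hP0, hP⟩ := exists_annihilator_of_isolated_zero Q j
  have hc : Continuous fun t : ℝ => a + t • v := by fun_prop
  have h0 : a + (0:ℝ) • v ∈ O := by simpa using hrO ha
  refine analyticAt_of_algebraic _ ?_ P hP0 (nhdsWithin_le_nhds ?_)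
  · exact ContDiffAt.fun_comp (f := fun t : ℝ => a + t • v) (g := fun y => Γ y j) 0
      (contDiffAt_pi.1 (hΓ _ h0) j) (by fun_prop)
  · filter_upwards [hc.continuousAt.preimage_mem_nhds (hO.mem_nhds h0)] with t ht
    have ht : a + t • v ∈ O := ht
    refine hP t (Γ (a + t • v)) (fun x => (hQ t x).1) ((hQ t _).2.2 ⟨hX _ ht, hL _ ht⟩) ?_
    filter_upwards [huniq _ ht] with x hx hx0
    exact hx ((hQ t x).2.1 hx0).1 ((hQ t x).2.1 hx0).2

/-- Near a smooth manifold point, `X` is a smooth graph over its tangent space. Here `L` is the derivative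
of the chart at `p`, so that the tangent space is given by the vanishing of the coordinates `i ≥ d` of
`L x`, and `Γ y` is the point of `X` for which the coordinates `i < d` of `L x` are those of `y`; the
remaining coordinates of `y` play no role. -/
lemma exists_parametrization {n : ℕ} (X : Set (Fin n → ℝ)) (p : Fin n → ℝ) (hp : p ∈ X)
    (h : IsSmoothManifoldPointAt X p) :
    ∃ (d : ℕ) (L : (Fin n → ℝ) ≃L[ℝ] (Fin n → ℝ)) (Γ : (Fin n → ℝ) → (Fin n → ℝ))
      (O W : Set (Fin n → ℝ)), IsOpen O ∧ IsOpen W ∧ p ∈ W ∧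
      (∀ y, Γ (trunc n d y) = Γ y) ∧ (∀ y, trunc n d y ∈ O ↔ y ∈ O) ∧
      (∀ y ∈ O, ContDiffAt ℝ ∞ Γ y) ∧ (∀ y ∈ O, Γ y ∈ X) ∧
      (∀ y ∈ O, trunc n d (L (Γ y)) = trunc n d y) ∧
      (∀ y ∈ O, ∀ᶠ x in 𝓝 (Γ y), x ∈ X → trunc n d (L x) = trunc n d y → x = Γ y) ∧
      (∀ x ∈ W, L x ∈ O) ∧ (∀ x ∈ W, x ∈ X → x = Γ (L x)) := by
  obtain ⟨d, U, V, φ, ψ, hU, hV, hpU, hφ, hψ, hUV, hVU, hψφ, hφψ, hXU⟩ := h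
  set π := trunc n d with hπ
  have hmemX : ∀ x ∈ U, (x ∈ X ↔ φ x = π (φ x)) := by
    intro x hx
    have : x ∈ X ↔ x ∈ X ∩ U := by simp [hx]
    rw [this, hXU]
    simp only [Set.mem_ofPred_eq, hx, true_and, funext_iff, hπ, trunc_apply]
    refine forall_congr' fun i => ?_
    by_cases h : (i : ℕ) < d
    · simp [h]
    · simp [h, not_lt.1 h]
  have hφc : ∀ x ∈ U, ContDiffAt ℝ ∞ φ x := fun x hx => hφ.contDiffAt (hU.mem_nhds hx)
  have hφd : HasFDerivAt φ (fderiv ℝ φ p) p :=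
    ((hφc p hpU).differentiableAt (by simp)).hasFDerivAt
  have hψd : HasFDerivAt ψ (fderiv ℝ ψ (φ p)) (φ p) :=
    ((hψ.contDiffAt (hV.mem_nhds (hUV hpU))).differentiableAt (by simp)).hasFDerivAt
  have hc1 : (fderiv ℝ ψ (φ p)).comp (fderiv ℝ φ p) = .id ℝ _ := by
    refine (hψd.comp p hφd).unique ((hasFDerivAt_id p).congr_of_eventuallyEq ?_)
    filter_upwards [hU.mem_nhds hpU] with x hx using hψφ x hx
  have hc2 : (fderiv ℝ φ p).comp (fderiv ℝ ψ (φ p)) = .id ℝ _ := by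
    have hφd' : HasFDerivAt φ (fderiv ℝ φ p) (ψ (φ p)) := by rwa [hψφ p hpU]
    refine (hφd'.comp (φ p) hψd).unique ((hasFDerivAt_id (φ p)).congr_of_eventuallyEq ?_)
    filter_upwards [hV.mem_nhds (hUV hpU)] with x hx using hφψ x hx
  let L : (Fin n → ℝ) ≃L[ℝ] (Fin n → ℝ) :=
    ContinuousLinearEquiv.equivOfInverse (fderiv ℝ φ p) (fderiv ℝ ψ (φ p))
      (fun x => DFunLike.congr_fun hc1 x) (fun x => DFunLike.congr_fun hc2 x)
  have hLφ : (L : (Fin n → ℝ) →L[ℝ] (Fin n → ℝ)) = fderiv ℝ φ p := rfl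
  -- `Φ` has the linear coordinates `i < d` and the chart coordinates `i ≥ d`; its derivative at `p` is `L`.
  let Φ : (Fin n → ℝ) → (Fin n → ℝ) := fun x => π (L x) + (φ x - π (φ x))
  have hΦc : ∀ x ∈ U, ContDiffAt ℝ ∞ Φ x := fun x hx =>
    (π.contDiff.contDiffAt.comp x L.contDiff.contDiffAt).add
      ((hφc x hx).sub (π.contDiff.contDiffAt.comp x (hφc x hx)))
  have hΦd : HasFDerivAt Φ (L : (Fin n → ℝ) →L[ℝ] (Fin n → ℝ)) p := by
    have := (π.hasFDerivAt.comp p L.hasFDerivAt).add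
      (hφd.sub (π.hasFDerivAt.comp p hφd))
    convert! this using 1
    rw [← hLφ]; abel
  have hπΦ : ∀ x, π (Φ x) = π (L x) := by
    intro x
    simp [Φ, hπ, trunc_trunc]
  have hΦX : ∀ x ∈ U, (x ∈ X ↔ Φ x = π (L x)) := by
    intro x hx
    rw [hmemX x hx]
    simp only [Φ, add_eq_left, sub_eq_zero]
  have hn : (∞ : ℕ∞ω) ≠ 0 := by simp
  let e := (hΦc p hpU).toOpenPartialHomeomorph Φ hΦd hn
  have hecoe : ∀ x, e x = Φ x := fun x => rfl
  have hpe : p ∈ e.source := (hΦc p hpU).mem_toOpenPartialHomeomorph_source hΦd hn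
  -- The derivative of `Φ` stays invertible near `p`, so the local inverse is smooth near `Φ p`.
  obtain ⟨N, hNsub, hN, hpN⟩ : ∃ N ⊆ {x | ∃ A : (Fin n → ℝ) ≃L[ℝ] (Fin n → ℝ),
      HasFDerivAt Φ (A : (Fin n → ℝ) →L[ℝ] (Fin n → ℝ)) x} ∩ U, IsOpen N ∧ p ∈ N := by
    refine mem_nhds_iff.1 ?_
    have hcont : ContinuousAt (fderiv ℝ Φ) p :=
      ((hΦc p hpU).fderiv_right (m := 0) (by simp)).continuousAt
    have hr : Set.range ((↑) : ((Fin n → ℝ) ≃L[ℝ] (Fin n → ℝ)) → _) ∈ 𝓝 (fderiv ℝ Φ p) := by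
      rw [hΦd.fderiv]; exact ContinuousLinearEquiv.nhds L
    filter_upwards [hcont.preimage_mem_nhds hr, hU.mem_nhds hpU] with x hx hxU
    obtain ⟨A, hA⟩ := hx
    refine ⟨⟨A, ?_⟩, hxU⟩
    rw [hA]
    exact ((hΦc x hxU).differentiableAt hn).hasFDerivAt
  let O := π ⁻¹' (e.target ∩ e.symm ⁻¹' N)
  have hO : IsOpen O := (e.isOpen_inter_preimage_symm hN).preimage π.continuous
  let Γ : (Fin n → ℝ) → (Fin n → ℝ) := fun y => e.symm (π y)
  have hΦΓ : ∀ y ∈ O, Φ (Γ y) = π y := fun y hy => e.right_inv hy.1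
  have hΓU : ∀ y ∈ O, Γ y ∈ U := fun y hy => (hNsub hy.2).2
  have hΓL : ∀ y ∈ O, π (L (Γ y)) = π y := by
    intro y hy
    rw [← hπΦ, hΦΓ y hy, hπ, trunc_trunc]
  have hpO : L p ∈ O := by
    have h1 : Φ p = π (L p) := (hΦX p hpU).1 hp
    refine ⟨?_, ?_⟩
    · rw [← h1]; exact e.map_source hpe
    · rw [Set.mem_preimage, ← h1, ← hecoe, e.left_inv hpe]; exact hpN
  refine ⟨d, L, Γ, O, (U ∩ e.source) ∩ L ⁻¹' O, hO,
    (hU.inter e.open_source).inter (hO.preimage L.continuous), ⟨⟨hpU, hpe⟩, hpO⟩,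
    ?_, ?_, ?_, ?_, hΓL, ?_, fun x hx => hx.2, ?_⟩
  · intro y
    simp only [Γ, hπ, trunc_trunc]
  · intro y
    simp only [O, Set.mem_preimage, hπ, trunc_trunc]
  · intro y hy
    obtain ⟨⟨A, hA⟩, hyU⟩ := hNsub hy.2
    exact (e.contDiffAt_symm hy.1 hA (hΦc _ hyU)).comp y π.contDiff.contDiffAt
  · intro y hy
    rw [hΦX _ (hΓU y hy), hΦΓ y hy, hΓL y hy]
  · intro y hy
    filter_upwards [hU.mem_nhds (hΓU y hy), e.open_source.mem_nhds (e.map_target hy.1)]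
      with x hxU hxe hxX hxy
    have h1 : e x = π y := by rw [hecoe, (hΦX x hxU).1 hxX, hxy]
    rw [← e.left_inv hxe, h1]
  · intro x hx hxX
    have h1 : e x = π (L x) := by rw [hecoe, (hΦX x hx.1.1).1 hxX]
    simp only [Γ]
    rw [← h1, e.left_inv hx.1.2]

/-- If the graph parametrization `Γ` is analytic, shearing the linear coordinates `L x` along the graph
yields an analytic chart that straightens `X`. -/
lemma isAnalyticManifoldPointAt_of_parametrization {n : ℕ} (X : Set (Fin n → ℝ)) (p : Fin n → ℝ)
    (d : ℕ) (L : (Fin n → ℝ) ≃L[ℝ] (Fin n → ℝ)) (Γ : (Fin n → ℝ) → (Fin n → ℝ))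
    (O W : Set (Fin n → ℝ)) (hO : IsOpen O) (hW : IsOpen W) (hpW : p ∈ W)
    (hΓπ : ∀ y, Γ (trunc n d y) = Γ y) (hOπ : ∀ y, trunc n d y ∈ O ↔ y ∈ O)
    (hΓ : ∀ y ∈ O, AnalyticAt ℝ Γ y) (hX : ∀ y ∈ O, Γ y ∈ X)
    (hL : ∀ y ∈ O, trunc n d (L (Γ y)) = trunc n d y)
    (hWO : ∀ x ∈ W, L x ∈ O) (hWX : ∀ x ∈ W, x ∈ X → x = Γ (L x)) :
    IsAnalyticManifoldPointAt X p := by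
  set π := trunc n d with hπ
  -- `τ y` consists of the coordinates `i ≥ d` of the graph over `y`.
  let τ : (Fin n → ℝ) → (Fin n → ℝ) := fun y => L (Γ y) - π (L (Γ y))
  have hπτ : ∀ y, π (τ y) = 0 := fun y => by simp [τ, hπ, trunc_trunc]
  have hcongr : ∀ y z, π y = π z → Γ y = Γ z := fun y z h => by rw [← hΓπ y, h, hΓπ]
  let χ : (Fin n → ℝ) → (Fin n → ℝ) := fun x => L x - τ (L x)
  let θ : (Fin n → ℝ) → (Fin n → ℝ) := fun y => L.symm (y + τ y)
  have hπχ : ∀ x, π (χ x) = π (L x) := fun x => by simp [χ, hπτ]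
  have hπθ : ∀ y, π (L (θ y)) = π y := fun y => by simp [θ, hπτ]
  have hθχ : ∀ x, θ (χ x) = x := by
    intro x
    have : τ (χ x) = τ (L x) := by simp only [τ, hcongr _ _ (hπχ x)]
    simp only [θ, this]
    simp [χ]
  have hχθ : ∀ y, χ (θ y) = y := by
    intro y
    have : τ (L (θ y)) = τ y := by simp only [τ, hcongr _ _ (hπθ y)]
    simp only [χ, this]
    simp [θ]
  have hτ : ∀ y ∈ O, AnalyticAt ℝ τ y := fun y hy =>
    ((L.toContinuousLinearMap.analyticAt _).comp (hΓ y hy)).sub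
      ((π.analyticAt _).comp ((L.toContinuousLinearMap.analyticAt _).comp (hΓ y hy)))
  have hθa : ∀ y ∈ O, AnalyticAt ℝ θ y := fun y hy =>
    (L.symm.toContinuousLinearMap.analyticAt _).comp (analyticAt_id.add (hτ y hy))
  have hOχ : ∀ x ∈ W, χ x ∈ O := fun x hx => by
    rw [← hOπ, hπχ, hOπ]; exact hWO x hx
  refine ⟨d, W, O ∩ θ ⁻¹' W, χ, θ, hW, ?_, hpW, ?_, fun y hy => hθa y hy.1, ?_,
    fun y hy => hy.2, fun x _ => hθχ x, fun y _ => hχθ y, ?_⟩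
  · exact ContinuousOn.isOpen_inter_preimage
      (fun y hy => (hθa y hy).continuousAt.continuousWithinAt) hO hW
  · intro x hx
    exact (L.toContinuousLinearMap.analyticAt x).sub
      ((hτ _ (hWO x hx)).comp (L.toContinuousLinearMap.analyticAt x))
  · intro x hx
    exact ⟨hOχ x hx, by simpa [hθχ] using hx⟩
  · ext x
    simp only [Set.mem_inter_iff, Set.mem_ofPred_eq]
    rw [and_comm]
    refine and_congr_right fun hx => ?_
    have h1 : (∀ i : Fin n, d ≤ (i : ℕ) → χ x i = 0) ↔ χ x = π (χ x) := by
      rw [funext_iff]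
      refine forall_congr' fun i => ?_
      rw [hπ, trunc_apply]
      by_cases h : (i : ℕ) < d
      · simp [h]
      · simp [h, not_lt.1 h]
    rw [h1, hπχ]
    have h2 : χ x = π (L x) ↔ x = Γ (L x) := by
      simp only [χ, τ, hL _ (hWO x hx)]
      rw [← L.injective.eq_iff (a := x)]
      constructor
      · intro h
        have : L x - L (Γ (L x)) = 0 := by
          rw [← sub_eq_zero] at h
          rw [← h]; abel
        exact sub_eq_zero.1 this
      · intro h
        rw [← h]; abel_nf
    rw [h2]
    exact ⟨hWX x hx, fun h => h ▸ hX _ (hWO x hx)⟩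

end

/-- **Analytic = smooth manifold points of real algebraic sets.**
Let `X = V_ℝ(I) ⊆ ℝⁿ` be a real algebraic set and `p ∈ X`.  Then `p` is an analytic
manifold point of `X` if and only if `p` is a smooth manifold point of `X`. -/
theorem analytic_iff_smooth_manifold_point
    (n : ℕ) (I : Ideal (MvPolynomial (Fin n) ℝ)) (p : Fin n → ℝ)
    (hp : p ∈ realZeroSet I) :
    IsAnalyticManifoldPointAt (realZeroSet I) p ↔
      IsSmoothManifoldPointAt (realZeroSet I) p := by
  constructor
  · rintro ⟨d, U, V, φ, ψ, hU, hV, hpU, hφ, hψ, h⟩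
    exact ⟨d, U, V, φ, ψ, hU, hV, hpU, hφ.contDiffOn hU.uniqueDiffOn,
      hψ.contDiffOn hV.uniqueDiffOn, h⟩
  · intro h
    obtain ⟨d, L, Γ, O, W, hO, hW, hpW, hΓπ, hOπ, hΓ, hX, hL, huniq, hWO, hWX⟩ :=
      exists_parametrization _ p hp h
    exact isAnalyticManifoldPointAt_of_parametrization _ p d L Γ O W hO hW hpW hΓπ hOπ
      (analyticAt_parametrization I d L Γ O hO hΓ hX hL huniq) hX hL hWO hWX
end

section
/- Let q ≤ ℝ[[x₁,…,xₙ]] be a prime ideal of the formal power series ring of height n−1. Then the real radical of q equals q if q is real, and equals the maximal ideal ⟨x₁,…,xₙ⟩ of ℝ[[x₁,…,xₙ]] if q is not real. -/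
/-!
Write `A = ℝ[[x₁,…,xₙ]]` and `m` for its maximal ideal.

A prime real ideal is its own real radical: a relation `x^(2r) + ∑ bᵢ² ∈ q` is a vanishing sum of
squares in `A ⧸ q`, so `x^r ∈ q`, hence `x ∈ q`.

For any `q ≤ m`, the real radical lies in `m`: squares have nonnegative constant terms, so a sum of
squares in `m` has all its summands in `m` (this also excludes `r = 0`).

If `q` is not real, some relation `y² + ∑ bᵢ² ∈ q` has `y ∉ q`. The ring `A` is Noetherian and `m`
is generated by the `n` variables, so `m` has height at most `n` by Krull's height theorem. As `q`
has height `n - 1`, no prime lies strictly between `q` and `m`, so `q + (y)` has radical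
containing `m`. For `x ∈ m` this gives `x^k ≡ c y` modulo `q`, and multiplying the relation by
`c²` yields `x^(2k) + ∑ (c bᵢ)² ∈ q`.
-/

open scoped BigOperators

/-- A commutative ring `B` is *(formally) real* if every equation
`b₁² + … + b_k² = 0` with `bᵢ ∈ B` implies `b₁ = … = b_k = 0`. -/
def IsRealRing (B : Type*) [CommRing B] : Prop :=
  ∀ (k : ℕ) (b : Fin k → B), ∑ i, b i ^ 2 = 0 → ∀ i, b i = 0

/-- An ideal `I ≤ B` is *real* if the quotient `B/I` is a real ring. -/
def Ideal.IsRealIdeal {B : Type*} [CommRing B] (I : Ideal B) : Prop :=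
  IsRealRing (B ⧸ I)

/-- The *real radical* of an ideal `I ≤ B`:
`√ʳI = { x ∈ B : x^(2r) + b₁² + … + b_k² ∈ I for some r, k ≥ 0 and bᵢ ∈ B }`. -/
def realRadical {B : Type*} [CommRing B] (I : Ideal B) : Set B :=
  { x | ∃ (r k : ℕ) (b : Fin k → B), x ^ (2 * r) + ∑ i, b i ^ 2 ∈ I }

namespace RealRadicalPowerSeries

open MvPowerSeries

/-- A power series without constant term is a combination of the variables: modulo `x₀` it becomes
a power series in the remaining variables. -/
lemma mem_span_X_of_constantCoeff_eq_zero (n : ℕ) (f : MvPowerSeries (Fin n) ℝ)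
    (hf : constantCoeff f = 0) :
    f ∈ Ideal.span (Set.range (X : Fin n → MvPowerSeries (Fin n) ℝ)) := by
  induction n with
  | zero =>
    have : f = 0 := (isEmptyEquiv (Fin 0) ℝ).injective (by simpa using hf)
    simp [this]
  | succ n ih =>
    set E := finSuccEquiv ℝ n
    set c := PowerSeries.constantCoeff (E f) with hc
    have hc0 : constantCoeff c = 0 := by
      have h := coeff_coeff_finSuccEquiv f (k := 0) (x := 0)
      rw [Finsupp.cons_zero_zero] at h
      simpa [hc, E, hf] using h
    obtain ⟨G, hG⟩ : PowerSeries.X ∣ E f - PowerSeries.C c := by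
      rw [PowerSeries.X_dvd_iff]; simp [hc]
    have hfE : f = X 0 * E.symm G + E.symm (PowerSeries.C c) := by
      apply E.injective
      simp [E, ← hG]
    rw [hfE]
    refine add_mem (Ideal.mul_mem_right _ _ (Ideal.subset_span ⟨0, rfl⟩)) ?_
    let φ : MvPowerSeries (Fin n) ℝ →+* MvPowerSeries (Fin (n + 1)) ℝ :=
      (E.symm : PowerSeries (MvPowerSeries (Fin n) ℝ) →+* _).comp PowerSeries.C
    have hφ := Ideal.mem_map_of_mem φ (ih c hc0)
    rw [Ideal.map_span] at hφ
    refine Ideal.span_mono ?_ hφ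
    rintro _ ⟨_, ⟨j, rfl⟩, rfl⟩
    refine ⟨j.succ, ?_⟩
    apply E.injective
    simp [φ, E]

lemma mem_maximalIdeal_iff (n : ℕ) (f : MvPowerSeries (Fin n) ℝ) :
    f ∈ IsLocalRing.maximalIdeal (MvPowerSeries (Fin n) ℝ) ↔ constantCoeff f = 0 := by
  rw [IsLocalRing.mem_maximalIdeal, mem_nonunits_iff, isUnit_iff_constantCoeff]
  simp

lemma height_maximalIdeal_le (n : ℕ) :
    (IsLocalRing.maximalIdeal (MvPowerSeries (Fin n) ℝ)).height ≤ n := by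
  have hle : IsLocalRing.maximalIdeal (MvPowerSeries (Fin n) ℝ) ≤
      Ideal.span (Set.range X) := fun f hf =>
    mem_span_X_of_constantCoeff_eq_zero n f ((mem_maximalIdeal_iff n f).1 hf)
  have hge : Ideal.span (Set.range X) ≤
      IsLocalRing.maximalIdeal (MvPowerSeries (Fin n) ℝ) := by
    rw [Ideal.span_le]
    rintro _ ⟨i, rfl⟩
    exact (mem_maximalIdeal_iff n _).2 (by simp)
  have heq := le_antisymm hle hge
  have h1 := Ideal.height_le_spanRank_toENat
    (IsLocalRing.maximalIdeal (MvPowerSeries (Fin n) ℝ)) (Ideal.IsPrime.ne_top inferInstance)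
  refine h1.trans ?_
  rw [heq]
  classical
  have h2 := Submodule.spanRank_span_le_card (R := MvPowerSeries (Fin n) ℝ)
    (Set.range (X : Fin n → MvPowerSeries (Fin n) ℝ))
  have h3 : Cardinal.mk (Set.range (X : Fin n → MvPowerSeries (Fin n) ℝ)) ≤ (n : Cardinal) := by
    simpa using Cardinal.mk_range_le (f := (X : Fin n → MvPowerSeries (Fin n) ℝ))
  simpa using Cardinal.toENat.monotone' (h2.trans h3)

/-- No prime lies strictly between a prime of height `n - 1` and the maximal ideal. -/
lemma eq_maximalIdeal_of_lt {n : ℕ} {q p : Ideal (MvPowerSeries (Fin n) ℝ)} (hq : q.IsPrime)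
    (hht : Order.height (⟨q, hq⟩ : PrimeSpectrum (MvPowerSeries (Fin n) ℝ))
      = ((n - 1 : ℕ) : ℕ∞)) (hp : p.IsPrime) (hqp : q < p) :
    p = IsLocalRing.maximalIdeal (MvPowerSeries (Fin n) ℝ) := by
  by_contra hne
  have hpm := lt_of_le_of_ne (IsLocalRing.le_maximalIdeal hp.ne_top) hne
  have h1 : Order.height (⟨q, hq⟩ : PrimeSpectrum (MvPowerSeries (Fin n) ℝ)) + 1 ≤
      Order.height (⟨p, hp⟩ : PrimeSpectrum (MvPowerSeries (Fin n) ℝ)) :=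
    Order.height_add_one_le hqp
  have h2 : Order.height (⟨p, hp⟩ : PrimeSpectrum (MvPowerSeries (Fin n) ℝ)) + 1 ≤
      Order.height (IsLocalRing.closedPoint (MvPowerSeries (Fin n) ℝ)) :=
    Order.height_add_one_le hpm
  have h3 : Order.height (IsLocalRing.closedPoint (MvPowerSeries (Fin n) ℝ)) ≤ n := by
    rw [← PrimeSpectrum.height_eq_orderHeight]
    exact height_maximalIdeal_le n
  have h4 : ((n - 1 : ℕ) : ℕ∞) + 1 + 1 ≤ n := by
    rw [← hht]
    exact ((add_le_add_left h1 1).trans h2).trans h3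
  norm_cast at h4
  omega

lemma realRadical_eq_of_isRealIdeal {B : Type*} [CommRing B] {q : Ideal B} (hq : q.IsPrime)
    (h : q.IsRealIdeal) : realRadical q = (q : Set B) := by
  ext x
  constructor
  · rintro ⟨r, k, b, hb⟩
    have hx := h (k + 1) (Fin.cons (Ideal.Quotient.mk q (x ^ r))
      fun i => Ideal.Quotient.mk q (b i)) ?_ 0
    · rw [Fin.cons_zero, Ideal.Quotient.eq_zero_iff_mem] at hx
      exact hq.mem_of_pow_mem r hx
    · rw [Fin.sum_univ_succ]
      rw [← Ideal.Quotient.eq_zero_iff_mem] at hb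
      simpa [mul_comm 2 r, pow_mul] using hb
  · intro hx
    exact ⟨1, 0, Fin.elim0, by simpa using Ideal.pow_mem_of_mem q hx 2 two_pos⟩

/-- The case `r = 0` is covered too: `1 + ∑ bᵢ²` has constant term at least `1`. -/
lemma realRadical_subset_maximalIdeal {n : ℕ} {q : Ideal (MvPowerSeries (Fin n) ℝ)}
    (hq : q ≠ ⊤) : realRadical q ⊆
      (IsLocalRing.maximalIdeal (MvPowerSeries (Fin n) ℝ) : Set (MvPowerSeries (Fin n) ℝ)) := by
  rintro x ⟨r, k, b, hb⟩
  have h0 := (mem_maximalIdeal_iff n _).1 (IsLocalRing.le_maximalIdeal hq hb)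
  simp only [map_add, map_sum, map_pow] at h0
  have h1 : 0 ≤ ∑ i, constantCoeff (b i) ^ 2 := Finset.sum_nonneg fun i _ => sq_nonneg _
  have h2 : 0 ≤ constantCoeff x ^ (2 * r) := by rw [pow_mul]; positivity
  exact (mem_maximalIdeal_iff n x).2 (eq_zero_of_pow_eq_zero (n := 2 * r) (by linarith))

/-- A non-real ideal has a relation `y² + ∑ bᵢ² ∈ q` with `y ∉ q`. -/
lemma exists_sq_add_sum_mem {B : Type*} [CommRing B] {q : Ideal B} (h : ¬ q.IsRealIdeal) :
    ∃ (y : B) (k : ℕ) (b : Fin k → B), y ∉ q ∧ y ^ 2 + ∑ i, b i ^ 2 ∈ q := by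
  simp only [Ideal.IsRealIdeal, IsRealRing, not_forall] at h
  obtain ⟨k, b, hb, i, hi⟩ := h
  choose a ha using fun j => Ideal.Quotient.mk_surjective (I := q) (b j)
  cases k with
  | zero => exact i.elim0
  | succ k =>
    refine ⟨a i, k, fun j => a (i.succAbove j), ?_, ?_⟩
    · rwa [← Ideal.Quotient.eq_zero_iff_mem, ha]
    · rw [← Ideal.Quotient.eq_zero_iff_mem]
      rw [Fin.sum_univ_succAbove _ i] at hb
      simpa [ha] using hb

lemma maximalIdeal_subset_realRadical {n : ℕ} {q : Ideal (MvPowerSeries (Fin n) ℝ)}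
    (hq : q.IsPrime)
    (hht : Order.height (⟨q, hq⟩ : PrimeSpectrum (MvPowerSeries (Fin n) ℝ))
      = ((n - 1 : ℕ) : ℕ∞)) (h : ¬ q.IsRealIdeal) :
    (IsLocalRing.maximalIdeal (MvPowerSeries (Fin n) ℝ) : Set (MvPowerSeries (Fin n) ℝ)) ⊆
      realRadical q := by
  intro x hx
  obtain ⟨y, k, b, hy, hb⟩ := exists_sq_add_sum_mem h
  have hrad : x ∈ (q ⊔ Ideal.span {y}).radical := by
    rw [Ideal.radical_eq_sInf, Submodule.mem_sInf]
    rintro p ⟨hle, hp⟩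
    have hyp : y ∈ p := hle (Ideal.mem_sup_right (Ideal.mem_span_singleton_self y))
    have hqp : q < p :=
      lt_of_le_of_ne (le_sup_left.trans hle) fun heq => hy (heq ▸ hyp)
    rw [eq_maximalIdeal_of_lt hq hht hp hqp]
    exact hx
  obtain ⟨s, hs⟩ := hrad
  obtain ⟨a, ha, z, hz, haz⟩ := Submodule.mem_sup.1 hs
  obtain ⟨c, rfl⟩ := Ideal.mem_span_singleton'.1 hz
  refine ⟨s, k, fun i => c * b i, ?_⟩
  have key : x ^ (2 * s) + ∑ i, (c * b i) ^ 2 =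
      a * (a + 2 * (c * y)) + c ^ 2 * (y ^ 2 + ∑ i, b i ^ 2) := by
    simp only [mul_pow, ← Finset.mul_sum]
    rw [mul_comm 2 s, pow_mul, ← haz]
    ring
  rw [key]
  exact add_mem (Ideal.mul_mem_right _ _ ha) (Ideal.mul_mem_left _ _ hb)

end RealRadicalPowerSeries


/-- **Real radicals of height `n−1` primes of `ℝ[[x₁,…,xₙ]]`.**
Let `q` be a prime ideal of the formal power series ring `ℝ[[x₁,…,xₙ]]` of height
`n − 1`.  Then `√ʳq = q` if `q` is real, and `√ʳq` is the maximal ideal `⟨x₁,…,xₙ⟩`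
(the series with zero constant term) if `q` is not real. -/
theorem real_radical_of_height_prime_of_powerseries
    (n : ℕ) (q : Ideal (MvPowerSeries (Fin n) ℝ)) (hq : q.IsPrime)
    (hht : Order.height (⟨q, hq⟩ : PrimeSpectrum (MvPowerSeries (Fin n) ℝ))
      = ((n - 1 : ℕ) : ℕ∞)) :
    (q.IsRealIdeal → realRadical q = (q : Set (MvPowerSeries (Fin n) ℝ))) ∧
    (¬ q.IsRealIdeal → realRadical q =
      (IsLocalRing.maximalIdeal (MvPowerSeries (Fin n) ℝ) :
        Set (MvPowerSeries (Fin n) ℝ))) := by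
  exact ⟨RealRadicalPowerSeries.realRadical_eq_of_isRealIdeal hq, fun h => Set.Subset.antisymm
    (RealRadicalPowerSeries.realRadical_subset_maximalIdeal hq.ne_top)
    (RealRadicalPowerSeries.maximalIdeal_subset_realRadical hq hht h)⟩
end

section
/- Let l₂, l₃, l₄ be positive real numbers with l₂ ≠ 2, and let I = ⟨ x² + y² − l₂², (u − 2)² + v² − l₃², (u − x)² + (v − y)² − l₄² ⟩ ≤ ℝ[x, y, u, v]. Then the Krull dimension of ℝ[x, y, u, v]/I equals 1. -/
/-!
Write `A = ℝ[x, y, u, v]/I`.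

*Upper bound.* On `A` the relations `y² = l₂² - x²` and `v² = l₃² - (u - 2)²` make `A` integral over
the image of `ℝ[x, u]`. Subtracting the first two relations from the third gives `a = 2 v y` with
`a = 4u - 2ux + l₂² + l₃² - l₄² - 4`, so that `N = a² - 4 (l₂² - x²)(l₃² - (u - 2)²)` vanishes
in `A`. As `N` is a nonzero polynomial, `dim A ≤ dim ℝ[x, u]/(N) ≤ 1`.

*Lower bound.* The three equations have a common complex zero (with `x = 0`, `y = l₂`), so `I` is
contained in a maximal ideal. Every maximal ideal of `ℝ[x, y, u, v]` has height `4`, and `I` has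
three generators, so Krull's height theorem gives `4 ≤ dim A + 3`.
-/

/-- The ideal of constraint equations of the planar four-bar mechanism with ground bar
of length `2` and bar lengths `l₂, l₃, l₄`, in `ℝ[x, y, u, v]` (variables
`X 0 = x`, `X 1 = y`, `X 2 = u`, `X 3 = v`):
`I = ⟨ x² + y² − l₂², (u − 2)² + v² − l₃², (u − x)² + (v − y)² − l₄² ⟩`. -/
noncomputable def fourBarIdeal (l₂ l₃ l₄ : ℝ) : Ideal (MvPolynomial (Fin 4) ℝ) :=
  Ideal.span
    { MvPolynomial.X 0 ^ 2 + MvPolynomial.X 1 ^ 2 - MvPolynomial.C (l₂ ^ 2),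
      (MvPolynomial.X 2 - MvPolynomial.C 2) ^ 2 + MvPolynomial.X 3 ^ 2
        - MvPolynomial.C (l₃ ^ 2),
      (MvPolynomial.X 2 - MvPolynomial.X 0) ^ 2
        + (MvPolynomial.X 3 - MvPolynomial.X 1) ^ 2 - MvPolynomial.C (l₄ ^ 2) }

open MvPolynomial

/-- An integral ring homomorphism, injective or not, does not increase the Krull dimension:
prime ideals in a strict chain of the target have distinct contractions. -/
lemma ringKrullDim_le_of_isIntegral {R S : Type*} [CommRing R] [CommRing S] (f : R →+* S)
    (hf : f.IsIntegral) : ringKrullDim S ≤ ringKrullDim R := by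
  let _ : Algebra R S := f.toAlgebra
  have : Algebra.IsIntegral R S := ⟨hf⟩
  refine Order.krullDim_le_of_strictMono (PrimeSpectrum.comap f) fun p q hpq => ?_
  exact Ideal.IsIntegral.comap_lt_comap (R := R) (I := p.asIdeal) (J := q.asIdeal) hpq

lemma height_eq_of_isMaximal_mvPolynomial {K : Type*} [Field K] (n : ℕ)
    (M : Ideal (MvPolynomial (Fin n) K)) [hM : M.IsMaximal] : M.height = n := by
  induction n with
  | zero =>
    have h := Ideal.height_le_ringKrullDim_of_ne_top hM.ne_top
    rw [MvPolynomial.ringKrullDim_of_isNoetherianRing, ringKrullDim_eq_zero_of_field] at h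
    simpa using h
  | succ n ih =>
    let e := (finSuccEquiv K n).toRingEquiv
    have hP : (M.map e).IsMaximal := Ideal.map_isMaximal_of_equiv e
    rw [← e.height_map M]
    generalize M.map e = P at hP
    have hU : (P.comap Polynomial.C).IsMaximal := Polynomial.isMaximal_comap_C_of_isJacobsonRing P
    have hl : P.LiesOver (P.comap Polynomial.C) := ⟨rfl⟩
    rw [Polynomial.height_eq_height_add_one (P.comap Polynomial.C) P, ih (P.comap Polynomial.C)]
    simp

/-- The eliminant of `y` and `v` from the four-bar equations, in `ℝ[x, u]` with `X 0 = x` and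
`X 1 = u`. -/
noncomputable def fourBarEliminant (l₂ l₃ l₄ : ℝ) : MvPolynomial (Fin 2) ℝ :=
  (4 * X 1 - 2 * X 1 * X 0 + C (l₂ ^ 2) + C (l₃ ^ 2) - C (l₄ ^ 2) - 4) ^ 2
    - 4 * (C (l₂ ^ 2) - X 0 ^ 2) * (C (l₃ ^ 2) - (X 1 - 2) ^ 2)

lemma fourBarEliminant_ne_zero (l₂ l₃ l₄ : ℝ) (hne : l₂ ≠ 2) : fourBarEliminant l₂ l₃ l₄ ≠ 0 := by
  intro h
  -- At `x = l₂` the eliminant is the square of an affine function of `u` with slope `4 - 2 l₂ ≠ 0`.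
  have key : ∀ u : ℝ, 4 * u - 2 * u * l₂ + l₂ ^ 2 + l₃ ^ 2 - l₄ ^ 2 - 4 = 0 := by
    intro u
    have := congrArg (eval ![l₂, u]) h
    simpa [fourBarEliminant] using this
  apply hne
  linarith [key 0, key 1]

lemma fourBar_relations (l₂ l₃ l₄ : ℝ) :
    let q := Ideal.Quotient.mk (fourBarIdeal l₂ l₃ l₄)
    q (X 0) ^ 2 + q (X 1) ^ 2 - q (C (l₂ ^ 2)) = 0 ∧
    (q (X 2) - 2) ^ 2 + q (X 3) ^ 2 - q (C (l₃ ^ 2)) = 0 ∧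
    (q (X 2) - q (X 0)) ^ 2 + (q (X 3) - q (X 1)) ^ 2 - q (C (l₄ ^ 2)) = 0 := by
  intro q
  have h2 : (2 : MvPolynomial (Fin 4) ℝ ⧸ fourBarIdeal l₂ l₃ l₄) = q (C 2) := by
    rw [show (C 2 : MvPolynomial (Fin 4) ℝ) = 2 from map_ofNat C 2, map_ofNat]
  rw [h2]
  simp only [← map_pow, ← map_sub, ← map_add]
  refine ⟨?_, ?_, ?_⟩ <;> refine Ideal.Quotient.eq_zero_iff_mem.mpr (Ideal.subset_span ?_) <;> simp

/-- The structure map `ℝ[x, u] → ℝ[x, y, u, v]/I`. -/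
noncomputable def fourBarProj (l₂ l₃ l₄ : ℝ) :
    MvPolynomial (Fin 2) ℝ →+* MvPolynomial (Fin 4) ℝ ⧸ fourBarIdeal l₂ l₃ l₄ :=
  (Ideal.Quotient.mk _).comp (aeval ![X 0, X 2] : MvPolynomial (Fin 2) ℝ →ₐ[ℝ] _).toRingHom

lemma fourBarProj_eliminant (l₂ l₃ l₄ : ℝ) :
    fourBarProj l₂ l₃ l₄ (fourBarEliminant l₂ l₃ l₄) = 0 := by
  obtain ⟨h1, h2, h3⟩ := fourBar_relations l₂ l₃ l₄
  simp only [fourBarProj, fourBarEliminant, RingHom.comp_apply, AlgHom.toRingHom_eq_coe,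
    RingHom.coe_coe, map_sub, map_add, map_mul, map_pow, aeval_X, map_ofNat, algHom_C,
    algebraMap_eq, Matrix.cons_val_zero, Matrix.cons_val_one] at h1 h2 h3 ⊢
  generalize Ideal.Quotient.mk (fourBarIdeal l₂ l₃ l₄) (X 0) = x at *
  generalize Ideal.Quotient.mk (fourBarIdeal l₂ l₃ l₄) (X 1) = y at *
  generalize Ideal.Quotient.mk (fourBarIdeal l₂ l₃ l₄) (X 2) = u at *
  generalize Ideal.Quotient.mk (fourBarIdeal l₂ l₃ l₄) (X 3) = v at *
  generalize Ideal.Quotient.mk (fourBarIdeal l₂ l₃ l₄) (C l₂) = a at *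
  generalize Ideal.Quotient.mk (fourBarIdeal l₂ l₃ l₄) (C l₃) = b at *
  generalize Ideal.Quotient.mk (fourBarIdeal l₂ l₃ l₄) (C l₄) = c at *
  linear_combination (4 * u - 2 * u * x + a ^ 2 + b ^ 2 - c ^ 2 - 4 + 2 * v * y) * (h3 - h1 - h2)
    + 4 * v ^ 2 * h1 + 4 * (a ^ 2 - x ^ 2) * h2

lemma fourBarProj_isIntegral (l₂ l₃ l₄ : ℝ) : (fourBarProj l₂ l₃ l₄).IsIntegral := by
  obtain ⟨h1, h2, -⟩ := fourBar_relations l₂ l₃ l₄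
  set f := fourBarProj l₂ l₃ l₄ with hf
  set q := Ideal.Quotient.mk (fourBarIdeal l₂ l₃ l₄) with hq
  have hC (r : ℝ) : f (C r) = q (C r) := by simp [hf, fourBarProj, hq]
  have h0 : f (X 0) = q (X 0) := by simp [hf, fourBarProj, hq]
  have h1' : f (X 1) = q (X 2) := by simp [hf, fourBarProj, hq]
  have sqrt_int (z : MvPolynomial (Fin 4) ℝ ⧸ fourBarIdeal l₂ l₃ l₄) (p : MvPolynomial (Fin 2) ℝ)
      (hz : z ^ 2 = f p) : f.IsIntegralElem z := by
    refine ⟨Polynomial.X ^ 2 - Polynomial.C p, Polynomial.monic_X_pow_sub_C p two_ne_zero, ?_⟩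
    simp [hz]
  have hX (i : Fin 4) : f.IsIntegralElem (q (X i)) := by
    fin_cases i
    · exact h0 ▸ f.isIntegralElem_map
    · refine sqrt_int _ (C (l₂ ^ 2) - X 0 ^ 2) ?_
      rw [map_sub, hC, map_pow f, h0]
      exact (by linear_combination h1 : q (X 1) ^ 2 = q (C (l₂ ^ 2)) - q (X 0) ^ 2)
    · exact h1' ▸ f.isIntegralElem_map
    · refine sqrt_int _ (C (l₃ ^ 2) - (X 1 - 2) ^ 2) ?_
      rw [map_sub, hC, map_pow f, map_sub f, h1', map_ofNat]
      exact (by linear_combination h2 : q (X 3) ^ 2 = q (C (l₃ ^ 2)) - (q (X 2) - 2) ^ 2)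
  intro z
  obtain ⟨p, rfl⟩ := Ideal.Quotient.mk_surjective z
  induction p using MvPolynomial.induction_on with
  | C r => exact hC r ▸ f.isIntegralElem_map
  | add p p' hp hp' => rw [map_add]; exact hp.add f hp'
  | mul_X p i hp => rw [map_mul]; exact hp.mul f (hX i)

lemma fourBar_krullDim_le_one (l₂ l₃ l₄ : ℝ) (hne : l₂ ≠ 2) :
    ringKrullDim (MvPolynomial (Fin 4) ℝ ⧸ fourBarIdeal l₂ l₃ l₄) ≤ 1 := by
  let N := fourBarEliminant l₂ l₃ l₄
  let g := Ideal.Quotient.lift (Ideal.span {N}) (fourBarProj l₂ l₃ l₄) fun a ha =>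
    (Ideal.span_singleton_le_iff_mem (I := RingHom.ker (fourBarProj l₂ l₃ l₄))).mpr
      (fourBarProj_eliminant l₂ l₃ l₄) ha
  have hcomp : g.comp (Ideal.Quotient.mk (Ideal.span {N})) = fourBarProj l₂ l₃ l₄ :=
    RingHom.ext fun _ => rfl
  have hg : g.IsIntegral := fun z =>
    RingHom.IsIntegralElem.of_comp (f := Ideal.Quotient.mk (Ideal.span {N}))
      (hcomp ▸ fourBarProj_isIntegral l₂ l₃ l₄ z)
  refine (ringKrullDim_le_of_isIntegral g hg).trans ?_
  have h := ringKrullDim_quotient_succ_le_of_nonZeroDivisor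
    (mem_nonZeroDivisors_of_ne_zero (fourBarEliminant_ne_zero l₂ l₃ l₄ hne))
  rw [MvPolynomial.ringKrullDim_of_isNoetherianRing, ringKrullDim_eq_zero_of_field, zero_add,
    Nat.card_fin] at h
  refine (ENat.WithBot.add_le_add_natCast_right_iff (c := 1)).mp (h.trans (le_of_eq ?_))
  norm_num

/-- The four-bar equations have a complex solution, even when the mechanism has no real
configuration. -/
lemma fourBarIdeal_ne_top (l₂ l₃ l₄ : ℝ) (h₂ : 0 < l₂) : fourBarIdeal l₂ l₃ l₄ ≠ ⊤ := by
  have hl : (l₂ : ℂ) ≠ 0 := by exact_mod_cast h₂.ne'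
  let c : ℂ := l₂ ^ 2 + l₃ ^ 2 - l₄ ^ 2 - 4
  have ha : (16 + 4 * l₂ ^ 2 : ℂ) ≠ 0 := by
    have : (16 + 4 * l₂ ^ 2 : ℝ) ≠ 0 := by positivity
    exact_mod_cast this
  -- With `x = 0` and `y = l₂` the eliminant is a quadratic in `u`, and `v = a / (2 y)`.
  obtain ⟨s, hs⟩ := IsAlgClosed.exists_pow_nat_eq
    (discrim (16 + 4 * l₂ ^ 2 : ℂ) (8 * c - 16 * l₂ ^ 2) (c ^ 2 - 4 * l₂ ^ 2 * (l₃ ^ 2 - 4)))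
    two_pos
  obtain ⟨u, hu⟩ := exists_quadratic_eq_zero ha ⟨s, by rw [← hs, sq]⟩
  obtain ⟨v, hv⟩ : ∃ v : ℂ, 2 * l₂ * v = 4 * u + c := ⟨(4 * u + c) / (2 * l₂), by field_simp⟩
  have hv2 : (u - 2) ^ 2 + v ^ 2 - l₃ ^ 2 = 0 := by
    have : (4 * l₂ ^ 2 : ℂ) * ((u - 2) ^ 2 + v ^ 2 - l₃ ^ 2) = 0 := by
      linear_combination hu + (2 * l₂ * v + 4 * u + c) * hv
    exact (mul_eq_zero.mp this).resolve_left (by simp [hl])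
  intro htop
  have hle : fourBarIdeal l₂ l₃ l₄ ≤
      RingHom.ker (aeval ![0, (l₂ : ℂ), u, v] : MvPolynomial (Fin 4) ℝ →ₐ[ℝ] ℂ) := by
    refine Ideal.span_le.mpr ?_
    rintro p (rfl | rfl | rfl)
    · simp [RingHom.mem_ker]
    · simpa [RingHom.mem_ker] using hv2
    · simp only [SetLike.mem_coe, RingHom.mem_ker]
      simp only [map_sub, map_add, map_pow, aeval_X, aeval_C, Complex.coe_algebraMap,
        Matrix.cons_val]
      linear_combination hv2 - hv
  exact RingHom.ker_ne_top _ (top_le_iff.mp (htop ▸ hle))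

lemma one_le_fourBar_krullDim (l₂ l₃ l₄ : ℝ) (h₂ : 0 < l₂) :
    1 ≤ ringKrullDim (MvPolynomial (Fin 4) ℝ ⧸ fourBarIdeal l₂ l₃ l₄) := by
  obtain ⟨M, hM, hIM⟩ := Ideal.exists_le_maximal _ (fourBarIdeal_ne_top l₂ l₃ l₄ h₂)
  have h := Ideal.height_le_ringKrullDim_quotient_add_encard (p := M) _ (Ideal.span_le.mp hIM)
  rw [height_eq_of_isMaximal_mvPolynomial] at h
  change _ ≤ ringKrullDim (MvPolynomial (Fin 4) ℝ ⧸ fourBarIdeal l₂ l₃ l₄) + _ at h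
  have hcard : (({ X 0 ^ 2 + X 1 ^ 2 - C (l₂ ^ 2), (X 2 - C 2) ^ 2 + X 3 ^ 2 - C (l₃ ^ 2),
      (X 2 - X 0) ^ 2 + (X 3 - X 1) ^ 2 - C (l₄ ^ 2) } :
      Set (MvPolynomial (Fin 4) ℝ)).encard) ≤ 3 := by
    refine (Set.encard_insert_le _ _).trans ?_
    refine (add_le_add_left (Set.encard_insert_le _ _) 1).trans ?_
    rw [Set.encard_singleton]
    norm_num
  have h' : (1 : WithBot ℕ∞) + 3 ≤
      ringKrullDim (MvPolynomial (Fin 4) ℝ ⧸ fourBarIdeal l₂ l₃ l₄) + 3 := by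
    refine le_trans (le_of_eq ?_) (h.trans (add_le_add_right (WithBot.coe_le_coe.mpr hcard) _))
    norm_num
  exact (ENat.WithBot.add_le_add_natCast_right_iff (c := 3)).mp h'

/-- **Dimension of the configuration space of the four-bar mechanism.**
For positive bar lengths `l₂, l₃, l₄` with `l₂ ≠ 2`, the Krull dimension of
`ℝ[x, y, u, v]/I` is `1`, where `I` is the four-bar constraint ideal. -/
theorem fourBar_krullDim_eq_one
    (l₂ l₃ l₄ : ℝ) (h₂ : 0 < l₂) (h₃ : 0 < l₃) (h₄ : 0 < l₄) (hne : l₂ ≠ 2) :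
    ringKrullDim (MvPolynomial (Fin 4) ℝ ⧸ fourBarIdeal l₂ l₃ l₄) = 1 :=
  le_antisymm (fourBar_krullDim_le_one l₂ l₃ l₄ hne) (one_le_fourBar_krullDim l₂ l₃ l₄ h₂)
end

section
/- Let l₂, l₄ be positive real numbers with l₂ ∉ {2, 8/3}, l₄ ≠ 2, l₂ + l₄ ≠ 4 and l₃ := l₂ + l₄ − 2 > 0, and let I = ⟨ x² + y² − l₂², (u − 2)² + v² − l₃², (u − x)² + (v − y)² − l₄² ⟩ ≤ ℝ[x, y, u, v]. Then the point p = (l₂, 0, l₂ + l₄, 0) lies in V_ℝ(I) and p is not an analytic manifold point of V_ℝ(I). -/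
open Filter Topology

/-- Velocities at an analytic manifold point are closed under addition. -/
lemma IsAnalyticManifoldPointAt.exists_curve_add {n : ℕ} {X : Set (Fin n → ℝ)} {p : Fin n → ℝ}
    (h : IsAnalyticManifoldPointAt X p) {γ₁ γ₂ : ℝ → Fin n → ℝ} {w₁ w₂ : Fin n → ℝ}
    (h₁0 : γ₁ 0 = p) (h₂0 : γ₂ 0 = p)
    (h₁X : ∀ᶠ t in 𝓝 0, γ₁ t ∈ X) (h₂X : ∀ᶠ t in 𝓝 0, γ₂ t ∈ X)
    (h₁ : HasDerivAt γ₁ w₁ 0) (h₂ : HasDerivAt γ₂ w₂ 0) :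
    ∃ δ : ℝ → Fin n → ℝ, δ 0 = p ∧ (∀ᶠ t in 𝓝 0, δ t ∈ X) ∧ HasDerivAt δ (w₁ + w₂) 0 := by
  obtain ⟨d, U, V, φ, ψ, hU, hV, hpU, hφ, hψ, hφm, hψm, hl, hr, hX⟩ := h
  have dφ : HasFDerivAt φ (fderiv ℝ φ p) p := (hφ p hpU).differentiableAt.hasFDerivAt
  have dψ : HasFDerivAt ψ (fderiv ℝ ψ (φ p)) (φ p) :=
    (hψ _ (hφm hpU)).differentiableAt.hasFDerivAt
  have hinv : ∀ w, fderiv ℝ ψ (φ p) (fderiv ℝ φ p w) = w := by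
    have e : (fun x => ψ (φ x)) =ᶠ[𝓝 p] id := by
      filter_upwards [hU.mem_nhds hpU] with x hx using hl x hx
    have := (dψ.comp p dφ).unique ((hasFDerivAt_id p).congr_of_eventuallyEq e)
    intro w
    exact DFunLike.congr_fun this w
  have key : ∀ (γ : ℝ → Fin n → ℝ) (w : Fin n → ℝ), γ 0 = p → (∀ᶠ t in 𝓝 0, γ t ∈ X) →
      HasDerivAt γ w 0 → ∀ i : Fin n, d ≤ (i : ℕ) → fderiv ℝ φ p w i = 0 := by
    intro γ w h0 hγX hγ i hi
    have hc : HasDerivAt (fun t => φ (γ t)) (fderiv ℝ φ p w) 0 :=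
      HasFDerivAt.comp_hasDerivAt (0 : ℝ) (h0.symm ▸ dφ) hγ
    have hci := (hasDerivAt_pi.1 hc) i
    have hUe : ∀ᶠ t in 𝓝 0, γ t ∈ U :=
      hγ.continuousAt.eventually_mem (hU.mem_nhds (h0.symm ▸ hpU))
    have e : (fun t => φ (γ t) i) =ᶠ[𝓝 0] fun _ => (0 : ℝ) := by
      filter_upwards [hγX, hUe] with t ht htU
      have : γ t ∈ X ∩ U := ⟨ht, htU⟩
      rw [hX] at this
      exact this.2 i hi
    exact hci.unique ((hasDerivAt_const (0 : ℝ) (0 : ℝ)).congr_of_eventuallyEq e)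
  set w := fderiv ℝ φ p (w₁ + w₂) with hw
  have hwL : ∀ i : Fin n, d ≤ (i : ℕ) → w i = 0 := by
    intro i hi
    rw [hw, map_add, Pi.add_apply, key γ₁ w₁ h₁0 h₁X h₁ i hi, key γ₂ w₂ h₂0 h₂X h₂ i hi, add_zero]
  have hpL : ∀ i : Fin n, d ≤ (i : ℕ) → φ p i = 0 := by
    have hpX : p ∈ X := h₁0 ▸ h₁X.self_of_nhds
    have : p ∈ X ∩ U := ⟨hpX, hpU⟩
    rw [hX] at this
    exact this.2
  have hη : HasDerivAt (fun t : ℝ => φ p + t • w) w 0 := by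
    simpa using ((hasDerivAt_id (0 : ℝ)).smul_const w).const_add (φ p)
  refine ⟨fun t => ψ (φ p + t • w), by simp [hl p hpU], ?_, ?_⟩
  · have hVe : ∀ᶠ t in 𝓝 (0 : ℝ), φ p + t • w ∈ V :=
      hη.continuousAt.eventually_mem (hV.mem_nhds (by simpa using hφm hpU))
    filter_upwards [hVe] with t ht
    have : ψ (φ p + t • w) ∈ X ∩ U := by
      rw [hX]
      refine ⟨hψm ht, fun i hi => ?_⟩
      rw [hr _ ht]
      simp [hpL i hi, hwL i hi]
    exact this.1
  · have h0 : φ p + (0 : ℝ) • w = φ p := by simp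
    have := HasFDerivAt.comp_hasDerivAt (0 : ℝ) (h0.symm ▸ dψ) hη
    exact this.congr_deriv (by rw [h0, hw, hinv])

lemma mem_realZeroSet_fourBarIdeal {l₂ l₃ l₄ : ℝ} {q : Fin 4 → ℝ} :
    q ∈ realZeroSet (fourBarIdeal l₂ l₃ l₄) ↔
      q 0 ^ 2 + q 1 ^ 2 = l₂ ^ 2 ∧ (q 2 - 2) ^ 2 + q 3 ^ 2 = l₃ ^ 2 ∧
        (q 2 - q 0) ^ 2 + (q 3 - q 1) ^ 2 = l₄ ^ 2 := by
  have hker : q ∈ realZeroSet (fourBarIdeal l₂ l₃ l₄) ↔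
      fourBarIdeal l₂ l₃ l₄ ≤ RingHom.ker (MvPolynomial.aeval (R := ℝ) q) := Iff.rfl
  rw [hker, fourBarIdeal, Ideal.span_le]
  simp [Set.insert_subset_iff, RingHom.mem_ker, sub_eq_zero]

/-- The combination `l₂ l₃ p₃ + l₃ l₄ p₁ - l₂ l₄ p₂` of the constraints, in terms of the
displacement `w` from `(l₂, 0, l₂ + l₄, 0)`; its linear terms cancel, so it is homogeneous. -/
def coneForm (l₂ l₃ l₄ : ℝ) (w : Fin 4 → ℝ) : ℝ :=
  l₂ * l₃ * ((w 2 - w 0) ^ 2 + (w 3 - w 1) ^ 2) + l₃ * l₄ * (w 0 ^ 2 + w 1 ^ 2)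
    - l₂ * l₄ * (w 2 ^ 2 + w 3 ^ 2)

lemma coneForm_smul (l₂ l₃ l₄ c : ℝ) (w : Fin 4 → ℝ) :
    coneForm l₂ l₃ l₄ (c • w) = c ^ 2 * coneForm l₂ l₃ l₄ w := by
  simp only [coneForm, Pi.smul_apply, smul_eq_mul]
  ring

lemma coneForm_sub_eq_zero {l₂ l₄ : ℝ} {q : Fin 4 → ℝ}
    (hq : q ∈ realZeroSet (fourBarIdeal l₂ (l₂ + l₄ - 2) l₄)) :
    coneForm l₂ (l₂ + l₄ - 2) l₄ (q - ![l₂, 0, l₂ + l₄, 0]) = 0 := by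
  obtain ⟨h1, h2, h3⟩ := mem_realZeroSet_fourBarIdeal.1 hq
  simp [coneForm]
  linear_combination l₂ * (l₂ + l₄ - 2) * h3 + (l₂ + l₄ - 2) * l₄ * h1 - l₂ * l₄ * h2

/-- Velocities of curves in the zero set lie on the cone `coneForm = 0`. -/
lemma coneForm_velocity_eq_zero {l₂ l₄ : ℝ} {δ : ℝ → Fin 4 → ℝ} {w : Fin 4 → ℝ}
    (h0 : δ 0 = ![l₂, 0, l₂ + l₄, 0])
    (hX : ∀ᶠ t in 𝓝 0, δ t ∈ realZeroSet (fourBarIdeal l₂ (l₂ + l₄ - 2) l₄))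
    (hδ : HasDerivAt δ w 0) : coneForm l₂ (l₂ + l₄ - 2) l₄ w = 0 := by
  have hcont : Continuous (coneForm l₂ (l₂ + l₄ - 2) l₄) := by
    unfold coneForm
    fun_prop
  have hlim := (hcont.tendsto w).comp (hasDerivAt_iff_tendsto_slope.1 hδ)
  have e : (coneForm l₂ (l₂ + l₄ - 2) l₄ ∘ slope δ 0) =ᶠ[𝓝[≠] 0] fun _ => (0 : ℝ) := by
    filter_upwards [hX.filter_mono nhdsWithin_le_nhds] with t ht
    simp only [Function.comp, slope, vsub_eq_sub]
    rw [coneForm_smul, h0, coneForm_sub_eq_zero ht, mul_zero]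
  exact tendsto_nhds_unique (hlim.congr' e) tendsto_const_nhds

/-- The squared length of `(u, v)` when the bar `l₃` makes the angle `2 t` with the ground. -/
noncomputable def diagSq (l₂ l₄ t : ℝ) : ℝ := (l₂ + l₄) ^ 2 - 8 * (l₂ + l₄ - 2) * Real.sin t ^ 2

/-- The cross product `u y - v x`, which is `±2` times the area of the triangle with sides `l₂`,
`l₄`, `√diagSq`.  Heron's formula gives its square `((l₂ + l₄)² - diagSq) (diagSq - (l₂ - l₄)²) / 4`,
and the first factor is `8 l₃ sin² t`; extracting `sin t` with its sign (instead of `|sin t|`)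
makes the function analytic near `t = 0`. -/
noncomputable def cross (l₂ l₄ σ t : ℝ) : ℝ :=
  σ * (Real.sin t * √(2 * (l₂ + l₄ - 2) * (diagSq l₂ l₄ t - (l₂ - l₄) ^ 2)))

/-- The scalar product `u x + v y`, determined by the three side lengths. -/
noncomputable def dot (l₂ l₄ t : ℝ) : ℝ := (diagSq l₂ l₄ t + l₂ ^ 2 - l₄ ^ 2) / 2

/-- A curve of configurations: the bar `l₃` makes the angle `2 t` with the ground, and `σ = ±1`
selects one of the two positions of the joint `(x, y)`. -/
noncomputable def branch (l₂ l₄ σ t : ℝ) : Fin 4 → ℝ :=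
  let u := l₂ + l₄ - 2 * (l₂ + l₄ - 2) * Real.sin t ^ 2
  let v := 2 * (l₂ + l₄ - 2) * (Real.sin t * Real.cos t)
  ![(dot l₂ l₄ t * u - v * cross l₂ l₄ σ t) / diagSq l₂ l₄ t,
    (dot l₂ l₄ t * v + u * cross l₂ l₄ σ t) / diagSq l₂ l₄ t, u, v]

lemma branch_zero {l₂ l₄ : ℝ} (σ : ℝ) (h : l₂ + l₄ ≠ 0) :
    branch l₂ l₄ σ 0 = ![l₂, 0, l₂ + l₄, 0] := by
  have : ((l₂ + l₄) ^ 2 + l₂ ^ 2 - l₄ ^ 2) / 2 * (l₂ + l₄) / (l₂ + l₄) ^ 2 = l₂ := by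
    field_simp
    ring
  simp [branch, cross, dot, diagSq, this]

lemma branch_mem {l₂ l₄ σ : ℝ} (h₂ : 0 < l₂) (h₄ : 0 < l₄) (h₃ : 0 < l₂ + l₄ - 2)
    (hσ : σ ^ 2 = 1) :
    ∀ᶠ t in 𝓝 0, branch l₂ l₄ σ t ∈ realZeroSet (fourBarIdeal l₂ (l₂ + l₄ - 2) l₄) := by
  have hc : Continuous (diagSq l₂ l₄) := by
    unfold diagSq
    fun_prop
  have h0 : (l₂ - l₄) ^ 2 < diagSq l₂ l₄ 0 := by
    simp only [diagSq, Real.sin_zero]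
    nlinarith [mul_pos h₂ h₄]
  filter_upwards [hc.continuousAt.eventually (lt_mem_nhds h0)] with t ht
  have hR : diagSq l₂ l₄ t ≠ 0 := ((sq_nonneg _).trans_lt ht).ne'
  have hsq : cross l₂ l₄ σ t ^ 2 = l₂ ^ 2 * diagSq l₂ l₄ t - dot l₂ l₄ t ^ 2 := by
    have hn : 0 ≤ 2 * (l₂ + l₄ - 2) * (diagSq l₂ l₄ t - (l₂ - l₄) ^ 2) :=
      mul_nonneg (by linarith) (by linarith)
    rw [cross, mul_pow, mul_pow, hσ, Real.sq_sqrt hn, dot, diagSq]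
    ring
  have huv : (l₂ + l₄ - 2 * (l₂ + l₄ - 2) * Real.sin t ^ 2) ^ 2
      + (2 * (l₂ + l₄ - 2) * (Real.sin t * Real.cos t)) ^ 2 = diagSq l₂ l₄ t := by
    rw [diagSq]
    linear_combination 4 * (l₂ + l₄ - 2) ^ 2 * Real.sin t ^ 2 * Real.sin_sq_add_cos_sq t
  have h₃' : (l₂ + l₄ - 2 * (l₂ + l₄ - 2) * Real.sin t ^ 2 - 2) ^ 2
      + (2 * (l₂ + l₄ - 2) * (Real.sin t * Real.cos t)) ^ 2 = (l₂ + l₄ - 2) ^ 2 := by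
    linear_combination 4 * (l₂ + l₄ - 2) ^ 2 * Real.sin t ^ 2 * Real.sin_sq_add_cos_sq t
  have hm : 2 * dot l₂ l₄ t = diagSq l₂ l₄ t + l₂ ^ 2 - l₄ ^ 2 := by
    rw [dot]
    ring
  rw [mem_realZeroSet_fourBarIdeal]
  simp only [branch, Matrix.cons_val]
  generalize l₂ + l₄ - 2 * (l₂ + l₄ - 2) * Real.sin t ^ 2 = u at *
  generalize 2 * (l₂ + l₄ - 2) * (Real.sin t * Real.cos t) = v at *
  generalize diagSq l₂ l₄ t = R at *
  generalize dot l₂ l₄ t = m at *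
  generalize cross l₂ l₄ σ t = s at *
  have hx : ((m * u - v * s) / R) ^ 2 + ((m * v + u * s) / R) ^ 2 = l₂ ^ 2 := by
    field_simp
    linear_combination (m ^ 2 + s ^ 2) * huv + R * hsq
  have hxy : u * ((m * u - v * s) / R) + v * ((m * v + u * s) / R) = m := by
    field_simp
    linear_combination m * huv
  exact ⟨hx, h₃', by linear_combination huv + hx - 2 * hxy - hm⟩

/-- The velocity of `branch` at `p`, for some number `r` common to both signs `σ`. -/
lemma branch_hasDerivAt {l₂ l₄ : ℝ} (h₂ : 0 < l₂) (h₄ : 0 < l₄) (h₃ : 0 < l₂ + l₄ - 2) :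
    ∃ r : ℝ, ∀ σ : ℝ, HasDerivAt (branch l₂ l₄ σ)
      ![0, 2 * l₂ * (l₂ + l₄ - 2) / (l₂ + l₄) + σ * r, 0, 2 * (l₂ + l₄ - 2)] 0 := by
  have hs : HasDerivAt Real.sin 1 0 := by simpa using Real.hasDerivAt_sin 0
  have hk : HasDerivAt Real.cos 0 0 := by simpa using Real.hasDerivAt_cos 0
  have hs2 : HasDerivAt (fun t => Real.sin t ^ 2) 0 0 := (hs.pow 2).congr_deriv (by simp)
  have hR : HasDerivAt (diagSq l₂ l₄) 0 0 := 
    ((hs2.const_mul (8 * (l₂ + l₄ - 2))).const_sub ((l₂ + l₄) ^ 2)).congr_deriv (by simp)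
  have hR0 : diagSq l₂ l₄ 0 = (l₂ + l₄) ^ 2 := by simp [diagSq]
  have hS : l₂ + l₄ ≠ 0 := by positivity
  have hm : HasDerivAt (dot l₂ l₄) 0 0 := 
    (((hR.add_const (l₂ ^ 2)).sub_const (l₄ ^ 2)).div_const 2).congr_deriv (by simp)
  have hm0 : dot l₂ l₄ 0 = l₂ * (l₂ + l₄) := by
    rw [dot, hR0]
    ring
  set G : ℝ → ℝ := fun t => √(2 * (l₂ + l₄ - 2) * (diagSq l₂ l₄ t - (l₂ - l₄) ^ 2)) with hG
  have hGd : HasDerivAt G 0 0 := by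
    have hne : 2 * (l₂ + l₄ - 2) * (diagSq l₂ l₄ 0 - (l₂ - l₄) ^ 2) ≠ 0 := by
      rw [hR0]
      have : (l₂ + l₄) ^ 2 - (l₂ - l₄) ^ 2 = 4 * (l₂ * l₄) := by ring
      rw [this]
      positivity
    simpa using ((hR.sub_const ((l₂ - l₄) ^ 2)).const_mul (2 * (l₂ + l₄ - 2))).sqrt hne
  refine ⟨G 0 / (l₂ + l₄), fun σ => ?_⟩
  have hc : HasDerivAt (cross l₂ l₄ σ) (σ * G 0) 0 := by
    have := (hs.mul hGd).const_mul σ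
    simp only [Real.sin_zero, one_mul, zero_mul, add_zero] at this
    exact this
  have hc0 : cross l₂ l₄ σ 0 = 0 := by simp [cross]
  have hu : HasDerivAt (fun t => l₂ + l₄ - 2 * (l₂ + l₄ - 2) * Real.sin t ^ 2) 0 0 := by
    simpa using (hs2.const_mul (2 * (l₂ + l₄ - 2))).const_sub (l₂ + l₄)
  have hv : HasDerivAt (fun t => 2 * (l₂ + l₄ - 2) * (Real.sin t * Real.cos t))
      (2 * (l₂ + l₄ - 2)) 0 := by
    simpa using (hs.mul hk).const_mul (2 * (l₂ + l₄ - 2))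
  have hR0' : diagSq l₂ l₄ 0 ≠ 0 := by
    rw [hR0]
    positivity
  rw [hasDerivAt_pi]
  intro i
  fin_cases i
  · have := ((hm.mul hu).sub (hv.mul hc)).div hR hR0'
    refine (this.congr_deriv ?_)
    simp [hc0]
  · have := ((hm.mul hv).add (hu.mul hc)).div hR hR0'
    refine (this.congr_deriv ?_)
    simp [hc0, hm0, hR0]
    field_simp
  · exact hu
  · exact hv

/-- **The singular four-bar configuration is a C-space singularity.**
Let `l₂, l₄ > 0` with `l₂ ∉ {2, 8/3}`, `l₄ ≠ 2`, `l₂ + l₄ ≠ 4` and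
`l₃ := l₂ + l₄ − 2 > 0`.  Then the point `p = (l₂, 0, l₂ + l₄, 0)` lies in `V_ℝ(I)` for
the four-bar constraint ideal `I` (with bar lengths `l₂, l₃, l₄`), and `p` is *not* an
analytic manifold point of `V_ℝ(I)`. -/
theorem fourBar_singular_point_not_manifold_point
    (l₂ l₄ : ℝ) (h₂ : 0 < l₂) (h₄ : 0 < l₄)
    (h₂2 : l₂ ≠ 2) (h₂83 : l₂ ≠ 8 / 3) (h₄2 : l₄ ≠ 2) (hsum : l₂ + l₄ ≠ 4)
    (h₃ : 0 < l₂ + l₄ - 2) :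
    ![l₂, 0, l₂ + l₄, 0] ∈ realZeroSet (fourBarIdeal l₂ (l₂ + l₄ - 2) l₄) ∧
    ¬ IsAnalyticManifoldPointAt (realZeroSet (fourBarIdeal l₂ (l₂ + l₄ - 2) l₄))
        ![l₂, 0, l₂ + l₄, 0] := by
  have hp := branch_mem (σ := 1) h₂ h₄ h₃ (by norm_num)
  have hn := branch_mem (σ := -1) h₂ h₄ h₃ (by norm_num)
  have hS : l₂ + l₄ ≠ 0 := by positivity
  refine ⟨branch_zero 1 hS ▸ hp.self_of_nhds, fun hman => ?_⟩
  obtain ⟨r, hr⟩ := branch_hasDerivAt h₂ h₄ h₃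
  obtain ⟨δ, h0, hX, hδ⟩ := hman.exists_curve_add (branch_zero 1 hS) (branch_zero (-1) hS) hp hn
    (hr 1) (hr (-1))
  have hq := coneForm_velocity_eq_zero h0 hX hδ
  have hval : coneForm l₂ (l₂ + l₄ - 2) l₄
      (![0, 2 * l₂ * (l₂ + l₄ - 2) / (l₂ + l₄) + 1 * r, 0, 2 * (l₂ + l₄ - 2)]
        + ![0, 2 * l₂ * (l₂ + l₄ - 2) / (l₂ + l₄) + -1 * r, 0, 2 * (l₂ + l₄ - 2)])
      = -(32 * l₂ * l₄ * (l₂ + l₄ - 2) ^ 2 / (l₂ + l₄)) := by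
    simp [coneForm]
    field_simp
    ring
  rw [hval] at hq
  have : 0 < 32 * l₂ * l₄ * (l₂ + l₄ - 2) ^ 2 / (l₂ + l₄) := by positivity
  linarith
end
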